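/- arXiv:1203.4161 — 3 statements merged into one kernel-verified Lean document; each statement's English description precedes it below -/
import Mathlib

section
/- Let g ≥ 1 and set n = 2g. Then for every r ≥ 1, the quotient γ_r L_g / γ_{r+1} L_g of consecutive terms of the lower central series of L_g is a finite-dimensional ℚ-vector space, and its dimension ε_r is given by ε_r = ∑_{ℓ | r} (μ(ℓ)/ℓ) · ∑_{p+2q = r/ℓ, p+q ≥ 1} (−1)^q · n^p · C(p+q, p)/(p+q), where the inner sum ranges over pairs of nonnegative integers (p,q) with p + 2q = r/ℓ. -/
/-- The element `ω = ∑_{i=1}^g ⁅x_i, x_{g+i}⁆` of the free Lie algebra `FreeLieAlgebra ℚ (Fin 2g)`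
on generators `x_1, …, x_{2g}`. -/
noncomputable def sympRelation (g : ℕ) : FreeLieAlgebra ℚ (Fin (2 * g)) :=
  ∑ i : Fin g,
    ⁅FreeLieAlgebra.of ℚ (⟨i.1, by have := i.2; omega⟩ : Fin (2 * g)),
      FreeLieAlgebra.of ℚ (⟨g + i.1, by have := i.2; omega⟩ : Fin (2 * g))⁆

/-- The Lie ideal of `FreeLieAlgebra ℚ (Fin 2g)` generated by `ω`. -/
noncomputable def sympIdeal (g : ℕ) : LieIdeal ℚ (FreeLieAlgebra ℚ (Fin (2 * g))) :=
  LieSubmodule.lieSpan ℚ (FreeLieAlgebra ℚ (Fin (2 * g))) {sympRelation g}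

/-- `L_g`, the quotient of the free Lie algebra `FreeLieAlgebra ℚ (Fin 2g)` by the Lie ideal
generated by `ω = ∑_{i=1}^g ⁅x_i, x_{g+i}⁆`. -/
abbrev SympLieAlgebra (g : ℕ) : Type :=
  FreeLieAlgebra ℚ (Fin (2 * g)) ⧸ sympIdeal g

/-- The quotient `γ_r L / γ_{r+1} L` of consecutive terms of the lower central series of a
Lie algebra `L` over `ℚ`, where `γ_1 L = L` and `γ_{r+1} L = ⁅L, γ_r L⁆`
(so `γ_r L = LieModule.lowerCentralSeries ℚ L L (r-1)`), realized as a quotient module. -/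
abbrev lcsQuotient (L : Type*) [LieRing L] [LieAlgebra ℚ L] (r : ℕ) : Type _ :=
  ↥(LieModule.lowerCentralSeries ℚ L L (r - 1)).toSubmodule ⧸
    Submodule.comap (LieModule.lowerCentralSeries ℚ L L (r - 1)).toSubmodule.subtype
      (LieModule.lowerCentralSeries ℚ L L r).toSubmodule

/-! ## Derivations of free Lie algebras -/

set_option linter.unusedSectionVars false
set_option linter.unusedSimpArgs false

namespace SympLie

/-- The Lie algebra `L[ε]` of dual numbers over `L`. -/
@[ext] structure Dual (L : Type*) where
  re : L
  eps : L

namespace Dual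
variable {L : Type*} [LieRing L] [LieAlgebra ℚ L]

def toProd : Dual L ≃ L × L where
  toFun x := (x.re, x.eps)
  invFun x := ⟨x.1, x.2⟩
  left_inv _ := rfl
  right_inv _ := rfl

instance : AddCommGroup (Dual L) := toProd.addCommGroup
instance : Module ℚ (Dual L) := toProd.module ℚ
instance : Bracket (Dual L) (Dual L) where
  bracket x y := ⟨⁅x.re, y.re⁆, ⁅x.re, y.eps⁆ + ⁅x.eps, y.re⁆⟩

@[simp] lemma zero_re : (0 : Dual L).re = 0 := rfl
@[simp] lemma zero_eps : (0 : Dual L).eps = 0 := rfl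
@[simp] lemma add_re (x y : Dual L) : (x + y).re = x.re + y.re := rfl
@[simp] lemma add_eps (x y : Dual L) : (x + y).eps = x.eps + y.eps := rfl
@[simp] lemma smul_re (t : ℚ) (x : Dual L) : (t • x).re = t • x.re := rfl
@[simp] lemma smul_eps (t : ℚ) (x : Dual L) : (t • x).eps = t • x.eps := rfl
@[simp] lemma lie_re (x y : Dual L) : ⁅x, y⁆.re = ⁅x.re, y.re⁆ := rfl
@[simp] lemma lie_eps (x y : Dual L) : ⁅x, y⁆.eps = ⁅x.re, y.eps⁆ + ⁅x.eps, y.re⁆ := rfl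

instance : LieRing (Dual L) where
  add_lie _ _ _ := by ext <;> simp; abel
  lie_add _ _ _ := by ext <;> simp; abel
  lie_self x := by
    ext
    · simp
    · simp only [lie_eps, zero_eps]
      rw [← lie_skew x.re x.eps]; exact neg_add_cancel _
  leibniz_lie _ _ _ := by ext <;> simp; abel

instance : LieAlgebra ℚ (Dual L) where
  lie_smul _ _ _ := by ext <;> simp

end Dual

/-- Induction principle for the free Lie algebra. -/
lemma free_subalgebra_eq_top {Y : Type*} (K : LieSubalgebra ℚ (FreeLieAlgebra ℚ Y))
    (h : ∀ y, FreeLieAlgebra.of ℚ y ∈ K) (u : FreeLieAlgebra ℚ Y) : u ∈ K := by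
  let f : FreeLieAlgebra ℚ Y →ₗ⁅ℚ⁆ K :=
    FreeLieAlgebra.lift ℚ (fun y => (⟨FreeLieAlgebra.of ℚ y, h y⟩ : K))
  have hf : K.incl.comp f = LieHom.id := by
    apply FreeLieAlgebra.hom_ext
    intro x
    simp [f]
  have := congrArg (fun k => k u) hf
  simp only [LieHom.comp_apply, LieHom.id_apply] at this
  rw [← this]
  exact (f u).2

/-- Elementwise induction principle for the free Lie algebra. -/
lemma free_induction {Y : Type*} (P : FreeLieAlgebra ℚ Y → Prop)
    (h0 : P 0) (hadd : ∀ u v, P u → P v → P (u + v)) (hsmul : ∀ (t : ℚ) u, P u → P (t • u))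
    (hlie : ∀ u v, P u → P v → P ⁅u, v⁆) (hof : ∀ y, P (FreeLieAlgebra.of ℚ y)) (u) : P u :=
  free_subalgebra_eq_top
    { carrier := {u | P u}
      add_mem' := fun {a b} ha hb => hadd a b ha hb
      zero_mem' := h0
      smul_mem' := fun t u hu => hsmul t u hu
      lie_mem' := fun {a b} ha hb => hlie a b ha hb } hof u

section
variable {Y : Type*} (f : Y → FreeLieAlgebra ℚ Y)

noncomputable def derAux : FreeLieAlgebra ℚ Y →ₗ⁅ℚ⁆ Dual (FreeLieAlgebra ℚ Y) :=
  FreeLieAlgebra.lift ℚ (fun y => (⟨FreeLieAlgebra.of ℚ y, f y⟩ : Dual (FreeLieAlgebra ℚ Y)))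

lemma derAux_re (u : FreeLieAlgebra ℚ Y) : (derAux f u).re = u := by
  induction u using free_induction with
  | h0 => simp
  | hadd u v hu hv => simp [hu, hv]
  | hsmul t u hu => simp [hu]
  | hlie u v hu hv => simp [hu, hv]
  | hof y => simp [derAux]

/-- The derivation of the free Lie algebra with prescribed values on the generators. -/
noncomputable def der : LieDerivation ℚ (FreeLieAlgebra ℚ Y) (FreeLieAlgebra ℚ Y) where
  toFun u := (derAux f u).eps
  map_add' _ _ := by simp
  map_smul' _ _ := by simp
  leibniz' u v := by
    simp only [LinearMap.coe_mk, AddHom.coe_mk, LieHom.map_lie, Dual.lie_eps, derAux_re]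
    rw [← lie_skew v, sub_neg_eq_add]

@[simp] lemma der_of (y : Y) : der f (FreeLieAlgebra.of ℚ y) = f y := by
  change (derAux f _).eps = _
  simp [derAux]

end

/-! ## Extension of a Lie algebra by a derivation -/

/-- The semidirect product of `ℚ` with `L`, with `ℚ` acting via the derivation `D`. -/
@[ext] structure Semi {L : Type*} [LieRing L] [LieAlgebra ℚ L] (D : LieDerivation ℚ L L) where
  t : ℚ
  v : L

namespace Semi
variable {L : Type*} [LieRing L] [LieAlgebra ℚ L] (D : LieDerivation ℚ L L)

variable {D} in
def toProd : Semi D ≃ ℚ × L where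
  toFun x := (x.t, x.v)
  invFun x := ⟨x.1, x.2⟩
  left_inv _ := rfl
  right_inv _ := rfl

instance : AddCommGroup (Semi D) := toProd.addCommGroup
instance : Module ℚ (Semi D) := toProd.module ℚ
instance : Bracket (Semi D) (Semi D) where
  bracket x y := ⟨0, ⁅x.v, y.v⁆ + x.t • D y.v - y.t • D x.v⟩

variable {D}
@[simp] lemma zero_t : (0 : Semi D).t = 0 := rfl
@[simp] lemma zero_v : (0 : Semi D).v = 0 := rfl
@[simp] lemma add_t (x y : Semi D) : (x + y).t = x.t + y.t := rfl
@[simp] lemma add_v (x y : Semi D) : (x + y).v = x.v + y.v := rfl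
@[simp] lemma smul_t (t : ℚ) (x : Semi D) : (t • x).t = t * x.t := rfl
@[simp] lemma smul_v (t : ℚ) (x : Semi D) : (t • x).v = t • x.v := rfl
@[simp] lemma lie_t (x y : Semi D) : ⁅x, y⁆.t = 0 := rfl
@[simp] lemma lie_v (x y : Semi D) : ⁅x, y⁆.v = ⁅x.v, y.v⁆ + x.t • D y.v - y.t • D x.v := rfl

instance : LieRing (Semi D) where
  add_lie _ _ _ := by ext <;> simp [add_smul]; abel
  lie_add _ _ _ := by ext <;> simp [add_smul]; abel
  lie_self x := by ext <;> simp
  leibniz_lie x y z := by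
    ext
    · simp
    · simp only [lie_v, lie_t, add_v, add_t, lie_add, lie_sub, add_lie, sub_lie, map_add, map_sub, map_smul,
        LieDerivation.apply_lie_eq_add, lie_smul, smul_lie, zero_smul, smul_add, smul_sub]
      rw [leibniz_lie x.v y.v z.v, smul_comm x.t y.t, smul_comm x.t z.t, smul_comm y.t z.t,
        ← lie_skew (D x.v) y.v]
      simp only [smul_neg]
      abel

instance : LieAlgebra ℚ (Semi D) where
  lie_smul t x y := by ext <;> simp [smul_add, smul_sub, mul_smul, smul_comm t]

variable (D) in
/-- `Semi D` is linearly just the product. -/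
def linEquiv : Semi D ≃ₗ[ℚ] ℚ × L :=
  { toProd with
    map_add' := fun _ _ => rfl
    map_smul' := fun _ _ => rfl }

variable (D) in
def inr : L →ₗ⁅ℚ⁆ Semi D where
  toFun u := ⟨0, u⟩
  map_add' _ _ := by ext <;> simp
  map_smul' _ _ := by ext <;> simp
  map_lie' := by intros; ext <;> simp

@[simp] lemma inr_t (u : L) : (inr D u).t = 0 := rfl
@[simp] lemma inr_v (u : L) : (inr D u).v = u := rfl

/-- The universal property of `Semi D`. -/
def desc {A : Type*} [LieRing A] [LieAlgebra ℚ A] (a : A) (h : L →ₗ⁅ℚ⁆ A)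
    (hD : ∀ u, h (D u) = ⁅a, h u⁆) : Semi D →ₗ⁅ℚ⁆ A where
  toFun x := x.t • a + h x.v
  map_add' x y := by simp [add_smul]; abel
  map_smul' t x := by simp [mul_smul]
  map_lie' {x y} := by
    simp only [lie_t, lie_v, zero_smul, zero_add, map_add, map_sub, map_smul, hD, LieHom.map_lie,
      lie_add, add_lie, smul_lie, lie_smul, lie_self, smul_zero]
    rw [← lie_skew (h x.v) a, smul_neg]
    abel

/-- The Euler-type derivation `(t, v) ↦ (w t, E v)`. -/
def euler (w : ℚ) (E : LieDerivation ℚ L L) (hE : ∀ u, E (D u) = D (E u) + w • D u) :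
    LieDerivation ℚ (Semi D) (Semi D) where
  toFun x := ⟨w * x.t, E x.v⟩
  map_add' x y := by ext <;> simp [mul_add]
  map_smul' t x := by ext <;> simp [mul_left_comm]
  leibniz' x y := by
    ext
    · simp [sub_eq_add_neg]
    · rw [sub_eq_add_neg, lie_skew]
      simp only [LinearMap.coe_mk, AddHom.coe_mk, lie_v, add_v, map_add, map_sub, map_smul, hE,
        LieDerivation.apply_lie_eq_add, smul_add, smul_smul, mul_comm w]
      abel

end Semi

/-- Recognition of a semidirect product. -/
lemma exists_equiv_semi {Y : Type*} (D : LieDerivation ℚ (FreeLieAlgebra ℚ Y) (FreeLieAlgebra ℚ Y))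
    {A : Type*} [LieRing A] [LieAlgebra ℚ A] (a : A) (h : FreeLieAlgebra ℚ Y →ₗ⁅ℚ⁆ A)
    (hD : ∀ y, h (D (FreeLieAlgebra.of ℚ y)) = ⁅a, h (FreeLieAlgebra.of ℚ y)⁆)
    (f : A →ₗ⁅ℚ⁆ Semi D) (hfa : f a = ⟨1, 0⟩)
    (hfh : ∀ y, f (h (FreeLieAlgebra.of ℚ y)) = ⟨0, FreeLieAlgebra.of ℚ y⟩)
    (hid : ∀ F : A →ₗ⁅ℚ⁆ A, F a = a → (∀ y, F (h (FreeLieAlgebra.of ℚ y)) =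
      h (FreeLieAlgebra.of ℚ y)) → ∀ x, F x = x) :
    ∃ e : A ≃ₗ⁅ℚ⁆ Semi D, ∀ x, e x = f x := by
  have hD' : ∀ u, h (D u) = ⁅a, h u⁆ := by
    intro u
    induction u using free_induction with
    | h0 => simp
    | hadd u v hu hv => simp [hu, hv]
    | hsmul t u hu => simp [hu]
    | hlie u v hu hv =>
      rw [LieDerivation.apply_lie_eq_add, map_add, LieHom.map_lie, LieHom.map_lie, LieHom.map_lie,
        hu, hv, leibniz_lie a, add_comm]
    | hof y => exact hD y
  have hfh' : ∀ u, f (h u) = ⟨0, u⟩ := by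
    have : f.comp h = Semi.inr D := FreeLieAlgebra.hom_ext hfh
    intro u
    exact congrArg (fun k => k u) this
  let k := Semi.desc a h hD'
  have hk : ∀ x, k x = x.t • a + h x.v := fun _ => rfl
  refine ⟨{ f with
    invFun := k
    left_inv := ?_
    right_inv := ?_ }, fun x => rfl⟩
  · intro x
    refine hid (k.comp f) ?_ ?_ x
    · simp [hk, hfa]
    · intro y
      simp [hk, hfh]
  · intro x
    change f (k x) = x
    rw [hk, map_add, map_smul, hfa, hfh']
    ext <;> simp

end SympLie

/-! ## Weight spaces of a derivation -/

namespace SympLie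
section Weight
variable {L : Type*} [LieRing L] [LieAlgebra ℚ L]

/-- The weight space of weight `m` of a derivation. -/
noncomputable def eig (E : LieDerivation ℚ L L) (m : ℕ) : Submodule ℚ L :=
  Module.End.eigenspace (E : Module.End ℚ L) (m : ℚ)

lemma mem_eig {E : LieDerivation ℚ L L} {m : ℕ} {u : L} : u ∈ eig E m ↔ E u = (m : ℚ) • u := by
  rw [eig, Module.End.mem_eigenspace_iff]; rfl

lemma lie_mem_eig {E : LieDerivation ℚ L L} {m k : ℕ} {u v : L} (hu : u ∈ eig E m)
    (hv : v ∈ eig E k) : ⁅u, v⁆ ∈ eig E (m + k) := by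
  rw [mem_eig] at *
  rw [LieDerivation.apply_lie_eq_add, hu, hv]
  simp only [lie_smul, smul_lie]
  push_cast
  module

lemma eig_indep (E : LieDerivation ℚ L L) : iSupIndep (eig E) :=
  (Module.End.eigenspaces_iSupIndep (E : Module.End ℚ L)).comp Nat.cast_injective

lemma eig_disjoint (E : LieDerivation ℚ L L) {m s : ℕ} (h : m < s) :
    Disjoint (eig E m) (⨆ k ∈ Set.Ici s, eig E k) :=
  (eig_indep E).disjoint_biSup (by simpa using h)

/-- Left bracketing as a linear map. -/
def lieLeft (u : L) : L →ₗ[ℚ] L where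
  toFun v := ⁅u, v⁆
  map_add' := by simp
  map_smul' := by simp

/-- Right bracketing as a linear map. -/
def lieRight (v : L) : L →ₗ[ℚ] L where
  toFun u := ⁅u, v⁆
  map_add' := by simp
  map_smul' := by simp

lemma lie_mem_of_iSup {S T : Set ℕ} {V W : ℕ → Submodule ℚ L} {U : Submodule ℚ L}
    (h : ∀ a ∈ S, ∀ b ∈ T, ∀ u ∈ V a, ∀ v ∈ W b, ⁅u, v⁆ ∈ U) {u v : L}
    (hu : u ∈ ⨆ a ∈ S, V a) (hv : v ∈ ⨆ b ∈ T, W b) : ⁅u, v⁆ ∈ U := by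
  have h1 : (⨆ a ∈ S, V a) ≤ U.comap (lieRight v) := by
    refine iSup₂_le fun a ha x hx => ?_
    have h2 : (⨆ b ∈ T, W b) ≤ U.comap (lieLeft x) :=
      iSup₂_le fun b hb y hy => h a ha b hb x hx y hy
    exact h2 hv
  exact h1 hu

lemma mem_iSup_set {S : Set ℕ} (V : ℕ → Submodule ℚ L) {a : ℕ} (ha : a ∈ S) {u : L}
    (hu : u ∈ V a) : u ∈ ⨆ a ∈ S, V a :=
  Submodule.mem_iSup_of_mem a (Submodule.mem_iSup_of_mem ha hu)

lemma lie_mem_lcs (a b : ℕ) : ∀ u ∈ LieModule.lowerCentralSeries ℚ L L a,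
    ∀ v ∈ LieModule.lowerCentralSeries ℚ L L b,
    ⁅u, v⁆ ∈ LieModule.lowerCentralSeries ℚ L L (a + b + 1) := by
  induction a generalizing b with
  | zero =>
    intro u _ v hv
    rw [zero_add, LieModule.lowerCentralSeries_succ]
    exact LieSubmodule.lie_mem_lie (LieSubmodule.mem_top _) hv
  | succ a ih =>
    intro u hu v hv
    rw [LieModule.lowerCentralSeries_succ, ← LieSubmodule.mem_toSubmodule,
      LieSubmodule.lieIdeal_oper_eq_linear_span'] at hu
    induction hu using Submodule.span_induction with
    | mem u hu =>
      obtain ⟨x, -, y, hy, rfl⟩ := hu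
      rw [lie_lie]
      apply sub_mem
      · have := ih b y hy v hv
        have h2 := LieSubmodule.lie_mem_lie (LieSubmodule.mem_top (R := ℚ) (L := L) x) this
        rw [← LieModule.lowerCentralSeries_succ] at h2
        convert h2 using 2; ring
      · have h1 : ⁅x, v⁆ ∈ LieModule.lowerCentralSeries ℚ L L (b + 1) := by
          rw [LieModule.lowerCentralSeries_succ]
          exact LieSubmodule.lie_mem_lie (LieSubmodule.mem_top _) hv
        have h2 := ih (b + 1) y hy _ h1
        convert h2 using 2; ring
    | zero => simp
    | add x y _ _ hx hy => rw [add_lie]; exact add_mem hx hy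
    | smul t x _ hx => rw [smul_lie]; exact SMulMemClass.smul_mem _ hx

variable (E : LieDerivation ℚ L L) (X : Set L)

lemma iSup_inf_eq_top (hX : ∀ x ∈ X, E x = x)
    (hgen : ∀ K : LieSubalgebra ℚ L, X ⊆ K → ∀ u, u ∈ K) (u : L) :
    u ∈ ⨆ m ∈ Set.Ici 1, (eig E m ⊓ (LieModule.lowerCentralSeries ℚ L L (m - 1)).toSubmodule) := by
  set V : ℕ → Submodule ℚ L :=
    fun m => eig E m ⊓ (LieModule.lowerCentralSeries ℚ L L (m - 1)).toSubmodule with hV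
  let K : LieSubalgebra ℚ L :=
    { (⨆ m ∈ Set.Ici 1, V m) with
      lie_mem' := by
        intro a b ha hb
        refine lie_mem_of_iSup ?_ ha hb
        intro i hi j hj x hx y hy
        refine mem_iSup_set V (a := i + j) ?_ ?_
        · simp only [Set.mem_Ici] at *; omega
        · refine ⟨lie_mem_eig hx.1 hy.1, ?_⟩
          have := lie_mem_lcs (i - 1) (j - 1) x hx.2 y hy.2
          have e : i - 1 + (j - 1) + 1 = i + j - 1 := by
            simp only [Set.mem_Ici] at *; omega
          rwa [e] at this }
  refine hgen K ?_ u
  intro x hx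
  refine mem_iSup_set V (a := 1) (by simp) ⟨?_, ?_⟩
  · refine mem_eig.2 ?_
    rw [hX x hx]; simp
  · simp

lemma eig_le_lcs (hX : ∀ x ∈ X, E x = x)
    (hgen : ∀ K : LieSubalgebra ℚ L, X ⊆ K → ∀ u, u ∈ K) {m : ℕ} {u : L} (hu : u ∈ eig E m) :
    u ∈ LieModule.lowerCentralSeries ℚ L L (m - 1) := by
  have h := iSup_inf_eq_top E X hX hgen u
  set V : ℕ → Submodule ℚ L :=
    fun m => eig E m ⊓ (LieModule.lowerCentralSeries ℚ L L (m - 1)).toSubmodule with hV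
  have h1 : (⨆ m ∈ Set.Ici 1, V m) ≤ V m ⊔ ⨆ k ∈ {k | k ≠ m}, V k := by
    refine iSup₂_le fun k _ => ?_
    by_cases hk : k = m
    · subst hk; exact le_sup_left
    · refine le_trans ?_ le_sup_right
      exact fun x hx => mem_iSup_set V (S := {k | k ≠ m}) hk hx
  obtain ⟨y, hy, z, hz, hyz⟩ := Submodule.mem_sup.1 (h1 h)
  have hz' : z ∈ ⨆ k ∈ {k | k ≠ m}, eig E k :=
    (iSup₂_mono (fun k _ => (inf_le_left : V k ≤ eig E k))) hz
  have hzm : z ∈ eig E m := by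
    have : z = u - y := by rw [← hyz]; abel
    rw [this]
    exact sub_mem hu hy.1
  have hd := (eig_indep E).disjoint_biSup (x := m) (y := {k | k ≠ m}) (by simp)
  have : z = 0 := (Submodule.disjoint_def.1 hd) z hzm hz'
  rw [this, add_zero] at hyz
  rw [← hyz]
  exact hy.2

lemma lcs_le_iSup (hX : ∀ x ∈ X, E x = x)
    (hgen : ∀ K : LieSubalgebra ℚ L, X ⊆ K → ∀ u, u ∈ K) (r : ℕ) {u : L}
    (hu : u ∈ LieModule.lowerCentralSeries ℚ L L r) :
    u ∈ ⨆ m ∈ Set.Ici (r + 1), eig E m := by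
  have htop : ∀ u, u ∈ ⨆ m ∈ Set.Ici 1, eig E m := fun u =>
    (iSup₂_mono (fun k _ => inf_le_left) :
      (⨆ m ∈ Set.Ici 1, (eig E m ⊓ (LieModule.lowerCentralSeries ℚ L L (m - 1)).toSubmodule)) ≤
        ⨆ m ∈ Set.Ici 1, eig E m) (iSup_inf_eq_top E X hX hgen u)
  induction r generalizing u with
  | zero => exact htop u
  | succ r ih =>
    rw [LieModule.lowerCentralSeries_succ, ← LieSubmodule.mem_toSubmodule,
      LieSubmodule.lieIdeal_oper_eq_linear_span'] at hu
    refine Submodule.span_le.2 ?_ hu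
    rintro _ ⟨x, -, y, hy, rfl⟩
    refine lie_mem_of_iSup ?_ (htop x) (ih hy)
    intro i hi j hj x hx y hy
    refine mem_iSup_set _ (a := i + j) ?_ (lie_mem_eig hx hy)
    simp only [Set.mem_Ici] at *; omega

/-- The lower central series quotients are the weight spaces. -/
lemma lcsQuotient_equiv (hX : ∀ x ∈ X, E x = x)
    (hgen : ∀ K : LieSubalgebra ℚ L, X ⊆ K → ∀ u, u ∈ K) (r : ℕ) (hr : 1 ≤ r) :
    Nonempty (eig E r ≃ₗ[ℚ] lcsQuotient L r) := by
  let i : eig E r →ₗ[ℚ] (LieModule.lowerCentralSeries ℚ L L (r - 1)).toSubmodule :=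
    Submodule.inclusion (fun u hu => eig_le_lcs E X hX hgen hu)
  let φ : eig E r →ₗ[ℚ] lcsQuotient L r := (Submodule.mkQ _).comp i
  refine ⟨LinearEquiv.ofBijective φ ⟨?_, ?_⟩⟩
  · rw [← LinearMap.ker_eq_bot, LinearMap.ker_eq_bot']
    intro u hu
    have h1 : (u : L) ∈ LieModule.lowerCentralSeries ℚ L L r := by
      have := (Submodule.Quotient.mk_eq_zero _).1 hu
      exact this
    have h2 := lcs_le_iSup E X hX hgen r h1
    exact Subtype.ext (Submodule.disjoint_def.1 (eig_disjoint E (Nat.lt_succ_self r)) u u.2 h2)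
  · intro q
    obtain ⟨⟨u, hu⟩, rfl⟩ := Submodule.Quotient.mk_surjective _ q
    have h2 := lcs_le_iSup E X hX hgen (r - 1) hu
    rw [Nat.sub_add_cancel hr] at h2
    have h1 : (⨆ m ∈ Set.Ici r, eig E m) ≤ eig E r ⊔ ⨆ k ∈ Set.Ici (r + 1), eig E k := by
      refine iSup₂_le fun k hk => ?_
      by_cases hk' : k = r
      · subst hk'; exact le_sup_left
      · refine le_trans ?_ le_sup_right
        refine fun x hx => mem_iSup_set _ ?_ hx
        simp only [Set.mem_Ici] at *; omega
    obtain ⟨y, hy, z, hz, hyz⟩ := Submodule.mem_sup.1 (h1 h2)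
    have hzz : z ∈ (LieModule.lowerCentralSeries ℚ L L r).toSubmodule := by
      refine (iSup₂_le fun k hk x hx => ?_ :
        (⨆ k ∈ Set.Ici (r + 1), eig E k) ≤ (LieModule.lowerCentralSeries ℚ L L r).toSubmodule) hz
      refine LieModule.antitone_lowerCentralSeries ℚ L L ?_ (eig_le_lcs E X hX hgen hx)
      simp only [Set.mem_Ici] at *; omega
    refine ⟨⟨y, hy⟩, ?_⟩
    refine (Submodule.Quotient.eq _).2 ?_
    change y - u ∈ (LieModule.lowerCentralSeries ℚ L L r).toSubmodule
    have : y - u = -z := by rw [← hyz]; abel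
    rw [this]
    exact neg_mem hzz

end Weight
end SympLie

/-! ## Lazard elimination -/

namespace SympLie

/-- The Euler derivation of a free Lie algebra on weighted generators. -/
noncomputable def eulerF {Y : Type*} (w : Y → ℕ) :
    LieDerivation ℚ (FreeLieAlgebra ℚ Y) (FreeLieAlgebra ℚ Y) :=
  der (fun y => (w y : ℚ) • FreeLieAlgebra.of ℚ y)

@[simp] lemma eulerF_of {Y : Type*} (w : Y → ℕ) (y : Y) :
    eulerF w (FreeLieAlgebra.of ℚ y) = (w y : ℚ) • FreeLieAlgebra.of ℚ y := der_of _ _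

lemma eig_eulerF_eq_bot {Y : Type*} (w : Y → ℕ) {s m : ℕ} (hs : ∀ y, s ≤ w y) (hm : m < s) :
    eig (eulerF w) m = ⊥ := by
  have htop : ∀ u, u ∈ ⨆ k ∈ Set.Ici s, eig (eulerF w) k := by
    intro u
    induction u using free_induction with
    | h0 => exact zero_mem _
    | hadd u v hu hv => exact add_mem hu hv
    | hsmul t u hu => exact Submodule.smul_mem _ _ hu
    | hlie u v hu hv =>
      refine lie_mem_of_iSup ?_ hu hv
      intro i hi j hj x hx y hy
      refine mem_iSup_set _ (a := i + j) ?_ (lie_mem_eig hx hy)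
      simp only [Set.mem_Ici] at *; omega
    | hof y => exact mem_iSup_set _ (a := w y) (hs y) (mem_eig.2 (eulerF_of w y))
  rw [Submodule.eq_bot_iff]
  intro u hu
  exact Submodule.disjoint_def.1 (eig_disjoint (eulerF w) hm) u hu (htop u)

lemma eig_finrank {A : Type*} [LieRing A] [LieAlgebra ℚ A] {L : Type*} [LieRing L] [LieAlgebra ℚ L]
    {D : LieDerivation ℚ L L} (EA : LieDerivation ℚ A A) (e : A ≃ₗ⁅ℚ⁆ Semi D) (w : ℕ)
    (E : LieDerivation ℚ L L) (hE : ∀ u, E (D u) = D (E u) + (w : ℚ) • D u)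
    (he : ∀ x, e (EA x) = Semi.euler (w : ℚ) E hE (e x)) (m : ℕ)
    [FiniteDimensional ℚ (eig E m)] :
    FiniteDimensional ℚ (eig EA m) ∧
      Module.finrank ℚ (eig EA m) = (if m = w then 1 else 0) + Module.finrank ℚ (eig E m) := by
  let P : Submodule ℚ ℚ := if m = w then ⊤ else ⊥
  have hP : ∀ t : ℚ, t ∈ P ↔ (w : ℚ) * t = m * t := by
    intro t
    by_cases h : m = w
    · simp [P, h]
    · have h' : ¬ ((w : ℚ) = m) := fun h2 => h (by exact_mod_cast h2.symm)
      simp [P, h, h']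
  have hPr : Module.finrank ℚ P = if m = w then 1 else 0 := by
    by_cases h : m = w
    · have : P = ⊤ := if_pos h
      rw [this, if_pos h, finrank_top, Module.finrank_self]
    · have : P = ⊥ := if_neg h
      rw [this, if_neg h, finrank_bot]
  have key : ∀ x, x ∈ eig EA m ↔ (e x).t ∈ P ∧ (e x).v ∈ eig E m := by
    intro x
    have hinj : Function.Injective e := e.injective
    rw [mem_eig, mem_eig, hP, ← hinj.eq_iff, he]
    have : e ((m : ℚ) • x) = (m : ℚ) • e x := map_smul e.toLinearEquiv _ _
    rw [this, Semi.ext_iff]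
    rfl
  let φ : (eig EA m) ≃ₗ[ℚ] P × eig E m :=
    { toFun := fun x => (⟨(e x).t, ((key x).1 x.2).1⟩, ⟨(e x).v, ((key x).1 x.2).2⟩)
      map_add' := by
        intro x y
        have : e ((x : A) + y) = e x + e y := map_add e.toLinearEquiv _ _
        ext <;> simp [this]
      map_smul' := by
        intro t x
        have : e (t • (x : A)) = t • e x := map_smul e.toLinearEquiv _ _
        ext <;> simp [this]
      invFun := fun p => ⟨e.symm ⟨p.1, p.2⟩, by
        rw [key]; simp⟩
      left_inv := by
        intro x
        ext
        exact e.symm_apply_apply x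
      right_inv := by
        intro p
        ext <;> simp }
  refine ⟨Module.Finite.equiv φ.symm, ?_⟩
  rw [φ.finrank_eq, Module.finrank_prod, hPr]

section Elim
variable {Y : Type} (w : Y → ℕ) (a : Y)

/-- New generators after eliminating `a`. -/
abbrev ElimT (a : Y) : Type := {y : Y // y ≠ a} × ℕ

/-- New weights after eliminating `a`. -/
def elimW : ElimT a → ℕ := fun p => w p.1 + p.2 * w a

/-- The action of `a` on the new generators. -/
noncomputable def elimD : LieDerivation ℚ (FreeLieAlgebra ℚ (ElimT a)) (FreeLieAlgebra ℚ (ElimT a)) :=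
  der (fun p => FreeLieAlgebra.of ℚ (p.1, p.2 + 1))

@[simp] lemma elimD_of (p : ElimT a) :
    elimD a (FreeLieAlgebra.of ℚ p) = FreeLieAlgebra.of ℚ (p.1, p.2 + 1) := der_of _ _

open Classical in
/-- The isomorphism of Lazard elimination on generators. -/
noncomputable def elimF : FreeLieAlgebra ℚ Y →ₗ⁅ℚ⁆ Semi (elimD a) :=
  FreeLieAlgebra.lift ℚ (fun y => if h : y = a then ⟨1, 0⟩ else
    ⟨0, FreeLieAlgebra.of ℚ ((⟨y, h⟩, 0) : ElimT a)⟩)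

lemma elimF_a : elimF a (FreeLieAlgebra.of ℚ a) = ⟨1, 0⟩ := by simp [elimF]

lemma elimF_ne (y : Y) (h : y ≠ a) : elimF a (FreeLieAlgebra.of ℚ y) =
    ⟨0, FreeLieAlgebra.of ℚ ((⟨y, h⟩, 0) : ElimT a)⟩ := by simp [elimF, h]

lemma euler_comm_of_generators {Y : Type*} (w : ℚ)
    (E D : LieDerivation ℚ (FreeLieAlgebra ℚ Y) (FreeLieAlgebra ℚ Y))
    (h : ∀ y, E (D (FreeLieAlgebra.of ℚ y)) =
      D (E (FreeLieAlgebra.of ℚ y)) + w • D (FreeLieAlgebra.of ℚ y)) (u : FreeLieAlgebra ℚ Y) :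
    E (D u) = D (E u) + w • D u := by
  induction u using free_induction with
  | h0 => simp
  | hadd u v hu hv => simp only [map_add, hu, hv, smul_add]; abel
  | hsmul t u hu => simp only [map_smul, hu, smul_add, smul_comm w]
  | hlie u v hu hv =>
    simp only [LieDerivation.apply_lie_eq_add, map_add, hu, hv, lie_add, add_lie, smul_add,
      lie_smul, smul_lie]
    abel
  | hof y => exact h y

lemma elim_comm (u : FreeLieAlgebra ℚ (ElimT a)) :
    eulerF (elimW w a) (elimD a u) =
      elimD a (eulerF (elimW w a) u) + (w a : ℚ) • elimD a u := by
  refine euler_comm_of_generators _ _ _ ?_ u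
  intro p
  simp only [elimD_of, eulerF_of, map_smul, elimW]
  push_cast
  module

lemma exists_elim : ∃ e : FreeLieAlgebra ℚ Y ≃ₗ⁅ℚ⁆ Semi (elimD a),
    ∀ x, e (eulerF w x) = Semi.euler (w a : ℚ) (eulerF (elimW w a)) (elim_comm w a) (e x) := by
  let h : FreeLieAlgebra ℚ (ElimT a) →ₗ⁅ℚ⁆ FreeLieAlgebra ℚ Y :=
    FreeLieAlgebra.lift ℚ (fun p => (lieLeft (FreeLieAlgebra.of ℚ a))^[p.2]
      (FreeLieAlgebra.of ℚ (p.1 : Y)))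
  have hh : ∀ p : ElimT a, h (FreeLieAlgebra.of ℚ p) = (lieLeft (FreeLieAlgebra.of ℚ a))^[p.2]
      (FreeLieAlgebra.of ℚ (p.1 : Y)) := fun p => by simp [h]
  obtain ⟨e, he⟩ := exists_equiv_semi (elimD a) (FreeLieAlgebra.of ℚ a) h
    (by
      intro p
      rw [elimD_of, hh, hh, Function.iterate_succ_apply']
      rfl)
    (elimF a) (elimF_a a)
    (by
      rintro ⟨⟨y, hy⟩, k⟩
      rw [hh]
      simp only
      induction k with
      | zero => exact elimF_ne a y hy
      | succ k ih =>
        rw [Function.iterate_succ_apply']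
        change elimF a ⁅FreeLieAlgebra.of ℚ a, (_ : FreeLieAlgebra ℚ Y)⁆ = _
        rw [LieHom.map_lie, ih, elimF_a]
        ext <;> simp)
    (by
      intro F hFa hF x
      have : F = LieHom.id := by
        apply FreeLieAlgebra.hom_ext
        intro y
        by_cases hy : y = a
        · subst hy; exact hFa
        · have := hF (⟨y, hy⟩, 0)
          rw [hh] at this
          exact this
      rw [this]; rfl)
  refine ⟨e, ?_⟩
  have hea : ∀ x y, e (x + y) = e x + e y := map_add e.toLinearEquiv
  have hes : ∀ (t : ℚ) x, e (t • x) = t • e x := map_smul e.toLinearEquiv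
  have hel : ∀ x y, e ⁅x, y⁆ = ⁅e x, e y⁆ := fun x y => e.map_lie x y
  have he0 : e 0 = 0 := map_zero e.toLinearEquiv
  intro u
  induction u using free_induction with
  | h0 => simp [he0]
  | hadd u v hu hv => simp only [map_add, hea, hu, hv]
  | hsmul t u hu => simp only [map_smul, hes, hu]
  | hlie u v hu hv => simp only [LieDerivation.apply_lie_eq_add, hea, hel, hu, hv]
  | hof y =>
    rw [eulerF_of, hes, he]
    by_cases hy : y = a
    · subst hy
      rw [elimF_a]
      ext
      · rfl
      · change (w y : ℚ) • (0 : FreeLieAlgebra ℚ (ElimT y)) = eulerF (elimW w y) 0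
        simp
    · rw [elimF_ne a y hy]
      ext
      · change (w y : ℚ) * 0 = (w a : ℚ) * 0
        simp
      · change (w y : ℚ) • FreeLieAlgebra.of ℚ ((⟨y, hy⟩, 0) : ElimT a) =
          eulerF (elimW w a) (FreeLieAlgebra.of ℚ ((⟨y, hy⟩, 0) : ElimT a))
        simp [elimW]

end Elim
end SympLie

/-! ## The generating function of the weight space dimensions -/

namespace SympLie
open PowerSeries

/-- Finitely many generators in each weight. -/
def LocFin {Y : Type} (w : Y → ℕ) : Prop := ∀ m, Finite {y // w y = m}

/-- Generating function of the generators. -/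
noncomputable def genW {Y : Type} (w : Y → ℕ) : PowerSeries ℚ :=
  PowerSeries.mk (fun m => (Nat.card {y // w y = m} : ℚ))

/-- Generating function `∑_k (∑_{m ∣ k} m d_m) X^k`. -/
noncomputable def genG (d : ℕ → ℕ) : PowerSeries ℚ :=
  PowerSeries.mk (fun k => ∑ m ∈ k.divisors, (m : ℚ) * (d m : ℚ))

/-- `s X^s / (1 - X^s)`. -/
noncomputable def genH (s : ℕ) : PowerSeries ℚ :=
  PowerSeries.mk (fun k => if s ∈ k.divisors then (s : ℚ) else 0)

lemma genH_mul (s : ℕ) (hs : 1 ≤ s) :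
    genH s * (1 - X ^ s) = (s : PowerSeries ℚ) * X ^ s := by
  have hc : (s : PowerSeries ℚ) = C (s : ℚ) := by simp
  ext k
  rw [hc, mul_sub, mul_one, map_sub, coeff_mul_X_pow', coeff_C_mul, coeff_X_pow, genH, coeff_mk]
  by_cases h : s ≤ k
  · rw [if_pos h, coeff_mk]
    obtain ⟨j, rfl⟩ := Nat.exists_eq_add_of_le h
    rw [Nat.add_sub_cancel_left]
    simp only [Nat.mem_divisors]
    rcases Nat.eq_zero_or_pos j with rfl | hj
    · have : s ≠ 0 := by omega
      simp [this]
    · have h1 : s + j ≠ 0 := by omega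
      have h2 : j ≠ 0 := by omega
      simp [h1, h2]
  · rw [if_neg h]
    have h1 : s ∉ k.divisors := fun h2 => h (Nat.divisor_le h2)
    have h2 : k ≠ s := by omega
    simp [h1, h2]

lemma genG_add (d d' : ℕ → ℕ) (s : ℕ) (h : ∀ m, d m = (if m = s then 1 else 0) + d' m) :
    genG d = genG d' + genH s := by
  ext k
  simp only [genG, genH, map_add, coeff_mk, h]
  push_cast
  simp only [mul_add, Finset.sum_add_distrib]
  rw [add_comm]
  congr 1
  simp

/-- The logarithmic derivative computation. -/
lemma log_deriv_step (s : ℕ) (hs : 1 ≤ s) (W' Q : PowerSeries ℚ) (hQ : (1 - X ^ s) * (1 - W') = Q)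
    (G : PowerSeries ℚ) :
    (G + genH s) * Q + X * derivative ℚ Q = (1 - X ^ s) * (G * (1 - W') - X * derivative ℚ W') := by
  have h1 := genH_mul s hs
  have hd : derivative ℚ (X ^ s : PowerSeries ℚ) * X = (s : PowerSeries ℚ) * X ^ s := by
    rw [Derivation.leibniz_pow]
    simp only [derivative_X, smul_eq_mul, mul_one, nsmul_eq_mul]
    obtain ⟨j, rfl⟩ := Nat.exists_eq_add_of_le hs
    rw [Nat.add_sub_cancel_left, pow_add]
    ring
  have h2 : derivative ℚ Q = (1 - X ^ s) * (- derivative ℚ W') +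
      (1 - W') * (- derivative ℚ (X ^ s : PowerSeries ℚ)) := by
    rw [← hQ, Derivation.leibniz]
    simp
  rw [h2, ← hQ]
  linear_combination (1 - W') * h1 - (1 - W') * hd

section Elim
variable {Y : Type} (w : Y → ℕ) (a : Y)

lemma elimW_ge (s : ℕ) (hs : ∀ y, s ≤ w y) (p : ElimT a) : s ≤ elimW w a p :=
  (hs p.1).trans (Nat.le_add_right _ _)

lemma elimW_locFin (hw : LocFin w) (h1 : ∀ y, 1 ≤ w y) : LocFin (elimW w a) := by
  intro m
  have : ∀ j, Finite {y // w y = j} := hw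
  let f : {p : ElimT a // elimW w a p = m} → (Σ j : Fin (m + 1), {y // w y = j}) × Fin (m + 1) :=
    fun p => (⟨⟨w p.1.1, by have := p.2; unfold elimW at this; omega⟩, ⟨p.1.1, rfl⟩⟩,
      ⟨p.1.2, by
        have h := p.2
        unfold elimW at h
        have := Nat.le_mul_of_pos_right p.1.2 (h1 a)
        omega⟩)
  refine Finite.of_injective f ?_
  rintro ⟨⟨⟨y, hy⟩, k⟩, hp⟩ ⟨⟨⟨y', hy'⟩, k'⟩, hp'⟩ h
  simp only [f, Prod.mk.injEq, Fin.mk.injEq] at h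
  obtain ⟨h1, h2⟩ := h
  have h3 : y = y' := by
    have := congrArg (fun q : (Σ j : Fin (m + 1), {y // w y = j}) => (q.2 : Y)) h1
    exact this
  subst h3 h2
  rfl

/-- Splitting the weight-`m` generators after elimination. -/
def elimSplit (m : ℕ) : {p : ElimT a // elimW w a p = m} ≃
    {y : {y : Y // y ≠ a} // w y = m} ⊕ {p : ElimT a // elimW w a p + w a = m} where
  toFun p := match p with
    | ⟨(y, 0), h⟩ => Sum.inl ⟨y, by simpa [elimW] using h⟩
    | ⟨(y, k + 1), h⟩ => Sum.inr ⟨(y, k), by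
        simp only [elimW] at h ⊢
        rw [← h]; ring⟩
  invFun q := match q with
    | Sum.inl y => ⟨(y.1, 0), by simpa [elimW] using y.2⟩
    | Sum.inr p => ⟨(p.1.1, p.1.2 + 1), by
        refine Eq.trans ?_ p.2
        simp only [elimW]
        ring⟩
  left_inv := by rintro ⟨⟨y, _ | k⟩, h⟩ <;> rfl
  right_inv := by rintro (y | p) <;> rfl

open Classical in
/-- Splitting off the generator `a`. -/
noncomputable def splitA (m : ℕ) : {y : Y // w y = m} ≃
    {y : {y : Y // y ≠ a} // w y = m} ⊕ {_u : Unit // w a = m} where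
  toFun y := if h : y.1 = a then Sum.inr ⟨(), by rw [← h]; exact y.2⟩ else Sum.inl ⟨⟨y.1, h⟩, y.2⟩
  invFun q := match q with
    | Sum.inl y => ⟨y.1, y.2⟩
    | Sum.inr p => ⟨a, p.2⟩
  left_inv := by
    rintro ⟨y, h⟩
    by_cases hy : y = a
    · subst hy; simp
    · simp [hy]
  right_inv := by
    rintro (⟨⟨y, hy⟩, h⟩ | p)
    · simp [hy]
    · simp

lemma card_unit (P : Prop) [Decidable P] : Nat.card {_u : Unit // P} = if P then 1 else 0 := by
  by_cases h : P
  · simp [h]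
  · simp [h]

lemma card_splitA (hw : LocFin w) (m : ℕ) : Nat.card {y // w y = m} =
    Nat.card {y : {y : Y // y ≠ a} // w y = m} + if w a = m then 1 else 0 := by
  have : Finite {y // w y = m} := hw m
  have hf : Finite ({y : {y : Y // y ≠ a} // w y = m} ⊕ {_u : Unit // w a = m}) :=
    Finite.of_equiv _ (splitA w a m)
  have := Finite.sum_left {_u : Unit // w a = m} (α := {y : {y : Y // y ≠ a} // w y = m})
  rw [Nat.card_congr (splitA w a m), Nat.card_sum, card_unit]

lemma genW_elim (hw : LocFin w) (h1 : ∀ y, 1 ≤ w y) :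
    (1 - X ^ (w a)) * (1 - genW (elimW w a)) = 1 - genW w := by
  have hw' := elimW_locFin w a hw h1
  suffices h : genW (elimW w a) + X ^ (w a) = genW w + genW (elimW w a) * X ^ (w a) by
    linear_combination -h
  ext m
  rw [map_add, map_add, coeff_X_pow, coeff_mul_X_pow']
  simp only [genW, coeff_mk]
  rw [card_splitA w a hw m]
  have : Finite {p // elimW w a p = m} := hw' m
  have hf : Finite ({y : {y : Y // y ≠ a} // w y = m} ⊕
    {p : ElimT a // elimW w a p + w a = m}) := Finite.of_equiv _ (elimSplit w a m)
  have hl : Finite {y : {y : Y // y ≠ a} // w y = m} :=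
    Finite.sum_left {p : ElimT a // elimW w a p + w a = m}
  have hr : Finite {p : ElimT a // elimW w a p + w a = m} :=
    Finite.sum_right {y : {y : Y // y ≠ a} // w y = m}
  rw [Nat.card_congr (elimSplit w a m), Nat.card_sum]
  have h3 : (Nat.card {p : ElimT a // elimW w a p + w a = m} : ℚ) =
      if w a ≤ m then (Nat.card {p : ElimT a // elimW w a p = m - w a} : ℚ) else 0 := by
    by_cases h : w a ≤ m
    · rw [if_pos h]
      congr 1
      refine Nat.card_congr (Equiv.subtypeEquivRight ?_)
      intro p
      omega
    · rw [if_neg h]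
      have : IsEmpty {p : ElimT a // elimW w a p + w a = m} := ⟨fun p => by
        have := p.2; omega⟩
      simp
  push_cast
  rw [h3]
  simp only [eq_comm (a := m)]
  ring

lemma card_elim (hw : LocFin w) (h1 : ∀ y, 1 ≤ w y) :
    Nat.card {y // w y = w a} = Nat.card {p : ElimT a // elimW w a p = w a} + 1 := by
  have hw' := elimW_locFin w a hw h1
  rw [card_splitA w a hw, if_pos rfl]
  congr 1
  refine Nat.card_congr ?_
  refine ((elimSplit w a (w a)).trans ?_).symm
  have : IsEmpty {p : ElimT a // elimW w a p + w a = w a} := ⟨fun p => by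
    have := p.2
    have := elimW_ge w a 1 h1 p
    omega⟩
  exact Equiv.sumEmpty _ _

end Elim

/-- Induction by eliminating generators of weight at most `N`. -/
theorem elim_induction (N : ℕ) (P : ∀ (Y : Type) (_ : Y → ℕ), Prop)
    (base : ∀ (Y : Type) (w : Y → ℕ), LocFin w → (∀ y, N < w y) → P Y w)
    (step : ∀ (Y : Type) (w : Y → ℕ) (a : Y), LocFin w → (∀ y, 1 ≤ w y) →
      P (ElimT a) (elimW w a) → P Y w)
    (Y : Type) (w : Y → ℕ) (hw : LocFin w) (h1 : ∀ y, 1 ≤ w y) : P Y w := by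
  have main : ∀ d s, s + d = N + 1 → 1 ≤ s → ∀ (Y : Type) (w : Y → ℕ), LocFin w →
      (∀ y, s ≤ w y) → P Y w := by
    intro d
    induction d with
    | zero =>
      intro s hs _ Y w hw h
      exact base Y w hw (fun y => by have := h y; omega)
    | succ d ih =>
      intro s hs hs1
      have inner : ∀ c, ∀ (Y : Type) (w : Y → ℕ), LocFin w → (∀ y, s ≤ w y) →
          Nat.card {y // w y = s} = c → P Y w := by
        intro c
        induction c with
        | zero =>
          intro Y w hw h hc
          refine ih (s + 1) (by omega) (by omega) Y w hw ?_
          intro y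
          have : Finite {y // w y = s} := hw s
          rw [Finite.card_eq_zero_iff] at hc
          have h2 : w y ≠ s := fun h3 => hc.false ⟨y, h3⟩
          have := h y
          omega
        | succ c ihc =>
          intro Y w hw h hc
          have h1 : ∀ y, 1 ≤ w y := fun y => hs1.trans (h y)
          have hne : Nonempty {y // w y = s} := by
            by_contra hne
            rw [not_nonempty_iff] at hne
            rw [Nat.card_of_isEmpty] at hc
            omega
          obtain ⟨a, ha⟩ := hne
          refine step Y w a hw h1 ?_
          refine ihc (ElimT a) (elimW w a) (elimW_locFin w a hw h1) (elimW_ge w a s h) ?_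
          have := card_elim w a hw h1
          rw [ha] at this
          omega
      intro Y w hw h
      exact inner _ Y w hw h rfl
  exact main N 1 (by omega) le_rfl Y w hw h1

theorem eig_finite (Y : Type) (w : Y → ℕ) (hw : LocFin w) (h1 : ∀ y, 1 ≤ w y) (m : ℕ) :
    FiniteDimensional ℚ (eig (eulerF w) m) := by
  refine elim_induction m (fun Y w => FiniteDimensional ℚ (eig (eulerF w) m)) ?_ ?_ Y w hw h1
  · intro Y w _ h
    rw [eig_eulerF_eq_bot w (s := m + 1) h (Nat.lt_succ_self m)]
    infer_instance
  · intro Y w a hw h1 h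
    obtain ⟨e, he⟩ := exists_elim w a
    exact (eig_finrank (eulerF w) e (w a) _ (elim_comm w a) he m).1

/-- Dimensions of the weight spaces of a weighted free Lie algebra. -/
noncomputable def dimF {Y : Type} (w : Y → ℕ) (m : ℕ) : ℕ := Module.finrank ℚ (eig (eulerF w) m)

/-- The weighted Witt formula, in logarithmic derivative form. -/
theorem witt (Y : Type) (w : Y → ℕ) (hw : LocFin w) (h1 : ∀ y, 1 ≤ w y) :
    genG (dimF w) * (1 - genW w) = X * derivative ℚ (genW w) := by
  rw [← sub_eq_zero]
  ext N
  rw [map_zero]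
  suffices h : X ^ (N + 1) ∣ genG (dimF w) * (1 - genW w) - X * derivative ℚ (genW w) from
    X_pow_dvd_iff.1 h N (Nat.lt_succ_self N)
  refine elim_induction N (fun Y w => X ^ (N + 1) ∣
    genG (dimF w) * (1 - genW w) - X * derivative ℚ (genW w)) ?_ ?_ Y w hw h1
  · intro Y w _ h
    have hG : X ^ (N + 1) ∣ genG (dimF w) := by
      rw [X_pow_dvd_iff]
      intro m hm
      rw [genG, coeff_mk]
      refine Finset.sum_eq_zero fun k hk => ?_
      have : k ≤ m := Nat.divisor_le hk
      rw [dimF, eig_eulerF_eq_bot w (s := N + 1) h (by omega)]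
      simp
    have hW : X ^ (N + 1) ∣ X * derivative ℚ (genW w) := by
      rw [X_pow_dvd_iff]
      intro m hm
      rcases m with _ | m
      · simp
      · rw [coeff_succ_X_mul]
        have : IsEmpty {y // w y = m + 1} := ⟨fun y => by
          have := h y.1; have := y.2; omega⟩
        simp [coeff_derivative, genW]
    exact dvd_sub (hG.mul_right _) hW
  · intro Y w a hw h1 h
    obtain ⟨e, he⟩ := exists_elim w a
    have hG : genG (dimF w) = genG (dimF (elimW w a)) + genH (w a) := by
      apply genG_add
      intro m
      have := eig_finite (ElimT a) (elimW w a) (elimW_locFin w a hw h1) (elimW_ge w a 1 h1) m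
      exact (eig_finrank (eulerF w) e (w a) _ (elim_comm w a) he m).2
    have h2 := log_deriv_step (w a) (h1 a) _ _ (genW_elim w a hw h1) (genG (dimF (elimW w a)))
    rw [← hG] at h2
    have h3 : derivative ℚ (1 - genW w) = - derivative ℚ (genW w) := by simp
    rw [h3, mul_neg, ← sub_eq_add_neg] at h2
    rw [h2]
    exact h.mul_left _

end SympLie

/-! ## Elimination in the surface Lie algebra -/

namespace SympLie

/-- Remaining indices. -/
abbrev SJ (n : ℕ) : Type := {j : Fin (2 * (n + 1)) // j.1 ≠ 0 ∧ j.1 ≠ n + 1}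

/-- Free generators of the kernel of `L_g → ℚ`. -/
abbrev ST (n : ℕ) : Type := Option (SJ n × ℕ)

/-- Weights of the free generators. -/
def sW (n : ℕ) : ST n → ℕ
  | none => 1
  | some p => 1 + p.2

def sA (n : ℕ) (i : Fin n) : SJ n := ⟨⟨i.1 + 1, by have := i.2; omega⟩, by simp, by
  have := i.2
  simp only [ne_eq]; omega⟩

def sB (n : ℕ) (i : Fin n) : SJ n := ⟨⟨n + 1 + (i.1 + 1), by have := i.2; omega⟩, by simp, by
  simp only [ne_eq]; omega⟩

noncomputable def sDval (n : ℕ) : ST n → FreeLieAlgebra ℚ (ST n)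
  | none => - ∑ i : Fin n, ⁅FreeLieAlgebra.of ℚ (some (sA n i, 0) : ST n),
      FreeLieAlgebra.of ℚ (some (sB n i, 0) : ST n)⁆
  | some p => FreeLieAlgebra.of ℚ (some (p.1, p.2 + 1))

noncomputable def sD (n : ℕ) : LieDerivation ℚ (FreeLieAlgebra ℚ (ST n)) (FreeLieAlgebra ℚ (ST n)) :=
  der (sDval n)

lemma sD_of (n : ℕ) (p : ST n) : sD n (FreeLieAlgebra.of ℚ p) = sDval n p := der_of _ _

lemma s_comm (n : ℕ) (u : FreeLieAlgebra ℚ (ST n)) :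
    eulerF (sW n) (sD n u) = sD n (eulerF (sW n) u) + ((1 : ℕ) : ℚ) • sD n u := by
  refine euler_comm_of_generators _ _ _ ?_ u
  rintro (_ | p)
  · simp only [sD, der_of, eulerF_of, map_smul, sDval, map_neg, map_sum,
      LieDerivation.apply_lie_eq_add, sW, lie_smul, smul_lie, Finset.sum_add_distrib]
    simp only [Nat.add_zero, Nat.cast_one, one_smul]
    abel
  · simp only [sD, der_of, eulerF_of, map_smul, sDval, sW]
    push_cast
    module

/-- The map to the semidirect product, on the free Lie algebra. -/
noncomputable def sF0 (n : ℕ) : FreeLieAlgebra ℚ (Fin (2 * (n + 1))) →ₗ⁅ℚ⁆ Semi (sD n) :=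
  FreeLieAlgebra.lift ℚ (fun j => if h0 : j.1 = 0 then ⟨1, 0⟩ else
    if h1 : j.1 = n + 1 then ⟨0, FreeLieAlgebra.of ℚ none⟩ else
    ⟨0, FreeLieAlgebra.of ℚ (some (⟨j, h0, h1⟩, 0))⟩)

lemma sF0_zero (n : ℕ) (j : Fin (2 * (n + 1))) (h0 : j.1 = 0) :
    sF0 n (FreeLieAlgebra.of ℚ j) = ⟨1, 0⟩ := by
  rw [sF0, FreeLieAlgebra.lift_of_apply, dif_pos h0]

lemma sF0_mid (n : ℕ) (j : Fin (2 * (n + 1))) (h1 : j.1 = n + 1) :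
    sF0 n (FreeLieAlgebra.of ℚ j) = ⟨0, FreeLieAlgebra.of ℚ none⟩ := by
  have h0 : ¬ j.1 = 0 := by omega
  rw [sF0, FreeLieAlgebra.lift_of_apply, dif_neg h0, dif_pos h1]

lemma sF0_J (n : ℕ) (j : SJ n) :
    sF0 n (FreeLieAlgebra.of ℚ j.1) = ⟨0, FreeLieAlgebra.of ℚ (some (j, 0))⟩ := by
  have h0 := j.2.1
  have h1 := j.2.2
  rw [sF0, FreeLieAlgebra.lift_of_apply, dif_neg h0, dif_neg h1]

/-- The relation after splitting off the first summand. -/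
lemma sympRelation_succ (n : ℕ) : sympRelation (n + 1) =
    ⁅FreeLieAlgebra.of ℚ (⟨0, by omega⟩ : Fin (2 * (n + 1))),
      FreeLieAlgebra.of ℚ (⟨n + 1, by omega⟩ : Fin (2 * (n + 1)))⁆ +
    ∑ i : Fin n, ⁅FreeLieAlgebra.of ℚ (sA n i).1, FreeLieAlgebra.of ℚ (sB n i).1⁆ := by
  rw [sympRelation, Fin.sum_univ_succ]
  rfl

lemma sF0_rel (n : ℕ) : sF0 n (sympRelation (n + 1)) = 0 := by
  rw [sympRelation_succ, map_add, map_sum, LieHom.map_lie, sF0_zero _ _ rfl, sF0_mid _ _ rfl]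
  have : ∀ i : Fin n, sF0 n ⁅FreeLieAlgebra.of ℚ (sA n i).1, FreeLieAlgebra.of ℚ (sB n i).1⁆ =
      Semi.inr (sD n) ⁅FreeLieAlgebra.of ℚ (some (sA n i, 0) : ST n),
        FreeLieAlgebra.of ℚ (some (sB n i, 0) : ST n)⁆ := by
    intro i
    rw [LieHom.map_lie, LieHom.map_lie, sF0_J, sF0_J]
    rfl
  simp only [this]
  rw [← map_sum]
  ext
  · rw [Semi.add_t, Semi.lie_t, Semi.inr_t]
    simp
  · rw [Semi.add_v, Semi.lie_v, Semi.inr_v]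
    simp [sD_of, sDval]

/-- The quotient map as a morphism of Lie algebras. -/
noncomputable def sMk (g : ℕ) : FreeLieAlgebra ℚ (Fin (2 * g)) →ₗ⁅ℚ⁆ SympLieAlgebra g where
  toLinearMap := (sympIdeal g).toSubmodule.mkQ
  map_lie' := rfl

lemma sMk_surjective (g : ℕ) : Function.Surjective (sMk g) := Submodule.mkQ_surjective _

lemma sMk_rel (g : ℕ) : sMk g (sympRelation g) = 0 := by
  have : sympRelation g ∈ (sympIdeal g).toSubmodule :=
    LieSubmodule.subset_lieSpan (Set.mem_singleton _)
  exact (Submodule.Quotient.mk_eq_zero _).2 this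

lemma sF_exists (n : ℕ) : ∃ f : SympLieAlgebra (n + 1) →ₗ⁅ℚ⁆ Semi (sD n),
    ∀ u, f (sMk (n + 1) u) = sF0 n u := by
  have hle : sympIdeal (n + 1) ≤ (sF0 n).ker := by
    rw [sympIdeal, LieSubmodule.lieSpan_le]
    rintro x rfl
    exact (LieHom.mem_ker (f := sF0 n)).2 (sF0_rel n)
  have hle' : (sympIdeal (n + 1)).toSubmodule ≤ LinearMap.ker (sF0 n : _ →ₗ[ℚ] Semi (sD n)) := by
    intro x hx
    exact (LieHom.mem_ker (f := sF0 n)).1 (hle hx)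
  refine ⟨{ toLinearMap := (sympIdeal (n + 1)).toSubmodule.liftQ _ hle', map_lie' := ?_ },
    fun u => rfl⟩
  intro x y
  obtain ⟨u, rfl⟩ := sMk_surjective _ x
  obtain ⟨v, rfl⟩ := sMk_surjective _ y
  rw [← LieHom.map_lie]
  exact (sF0 n).map_lie u v

lemma sympLie_elim (n : ℕ) : ∃ e : SympLieAlgebra (n + 1) ≃ₗ⁅ℚ⁆ Semi (sD n),
    ∀ u, e (sMk (n + 1) u) = sF0 n u := by
  obtain ⟨f, hf⟩ := sF_exists n
  let al : Fin (2 * (n + 1)) → SympLieAlgebra (n + 1) := fun j => sMk (n + 1) (FreeLieAlgebra.of ℚ j)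
  let j0 : Fin (2 * (n + 1)) := ⟨0, by omega⟩
  let j1 : Fin (2 * (n + 1)) := ⟨n + 1, by omega⟩
  let h : FreeLieAlgebra ℚ (ST n) →ₗ⁅ℚ⁆ SympLieAlgebra (n + 1) :=
    FreeLieAlgebra.lift ℚ (fun p => match p with
      | none => al j1
      | some p => (lieLeft (al j0))^[p.2] (al p.1))
  have hnone : h (FreeLieAlgebra.of ℚ none) = al j1 := by simp [h]
  have hsome : ∀ p, h (FreeLieAlgebra.of ℚ (some p)) = (lieLeft (al j0))^[p.2] (al p.1) :=
    fun p => by simp [h]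
  have hsome0 : ∀ j, h (FreeLieAlgebra.of ℚ (some (j, 0))) = al j := fun j => hsome _
  have hfa : f (al j0) = ⟨1, 0⟩ := by rw [hf, sF0_zero _ _ rfl]
  obtain ⟨e, he⟩ := exists_equiv_semi (sD n) (al j0) h
    (by
      rintro (_ | p)
      · rw [hnone, sD, der_of]
        simp only [sDval, map_neg, map_sum, LieHom.map_lie, hsome0]
        have := sMk_rel (n + 1)
        rw [sympRelation_succ, map_add, map_sum, LieHom.map_lie] at this
        simp only [LieHom.map_lie] at this
        exact (eq_neg_of_add_eq_zero_left this).symm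
      · rw [sD, der_of]
        simp only [sDval]
        rw [hsome, hsome, Function.iterate_succ_apply']
        rfl)
    f hfa
    (by
      rintro (_ | ⟨j, k⟩)
      · rw [hnone, hf, sF0_mid _ _ rfl]
      · rw [hsome]
        simp only
        induction k with
        | zero => exact (hf _).trans (sF0_J n j)
        | succ k ih =>
          rw [Function.iterate_succ_apply']
          change f ⁅al j0, (_ : SympLieAlgebra (n + 1))⁆ = _
          rw [LieHom.map_lie, ih, hfa]
          ext <;> simp [sD_of, sDval])
    (by
      intro F hFa hF x
      have : F.comp (sMk (n + 1)) = sMk (n + 1) := by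
        apply FreeLieAlgebra.hom_ext
        intro j
        by_cases h0 : j.1 = 0
        · have : j = j0 := Fin.ext h0
          subst this; exact hFa
        by_cases h1 : j.1 = n + 1
        · have : j = j1 := Fin.ext h1
          subst this
          have := hF none
          rw [hnone] at this
          exact this
        · have := hF (some (⟨j, h0, h1⟩, 0))
          rw [hsome0] at this
          exact this
      obtain ⟨u, rfl⟩ := sMk_surjective _ x
      exact congrArg (fun k => k u) this)
  exact ⟨e, fun u => by rw [he, hf]⟩

/-- The Euler derivation on `L_g`. -/
lemma sympLie_euler (n : ℕ) : ∃ (e : SympLieAlgebra (n + 1) ≃ₗ⁅ℚ⁆ Semi (sD n))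
    (EA : LieDerivation ℚ (SympLieAlgebra (n + 1)) (SympLieAlgebra (n + 1))),
    (∀ x, e (EA x) = Semi.euler ((1 : ℕ) : ℚ) (eulerF (sW n)) (s_comm n) (e x)) ∧
    (∀ j, EA (sMk (n + 1) (FreeLieAlgebra.of ℚ j)) = sMk (n + 1) (FreeLieAlgebra.of ℚ j)) := by
  obtain ⟨e, he⟩ := sympLie_elim n
  let S := Semi.euler ((1 : ℕ) : ℚ) (eulerF (sW n)) (s_comm n)
  let EA : LieDerivation ℚ (SympLieAlgebra (n + 1)) (SympLieAlgebra (n + 1)) :=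
    { toLinearMap := e.symm.toLinearEquiv.toLinearMap ∘ₗ S.toLinearMap ∘ₗ
        e.toLinearEquiv.toLinearMap
      leibniz' := by
        intro a b
        change e.symm (S (e ⁅a, b⁆)) = ⁅a, e.symm (S (e b))⁆ - ⁅b, e.symm (S (e a))⁆
        have hel : ∀ x y, e ⁅x, y⁆ = ⁅e x, e y⁆ := fun x y => e.map_lie x y
        apply e.injective
        have hes : ∀ x y, e (x - y) = e x - e y := map_sub e.toLinearEquiv
        change e (e.symm (S (e ⁅a, b⁆))) = e (⁅a, e.symm (S (e b))⁆ - ⁅b, e.symm (S (e a))⁆)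
        rw [hes, hel, hel, hel, e.apply_symm_apply, e.apply_symm_apply, e.apply_symm_apply]
        exact S.apply_lie_eq_sub _ _ }
  have hEA : ∀ x, e (EA x) = S (e x) := fun x => e.apply_symm_apply _
  refine ⟨e, EA, hEA, ?_⟩
  intro j
  apply e.injective
  change e (EA _) = e _
  rw [hEA, he]
  by_cases h0 : j.1 = 0
  · rw [sF0_zero _ _ h0]
    ext
    · change ((1 : ℕ) : ℚ) * 1 = 1
      simp
    · change eulerF (sW n) 0 = 0
      simp
  by_cases h1 : j.1 = n + 1
  · rw [sF0_mid _ _ h1]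
    ext
    · change ((1 : ℕ) : ℚ) * 0 = 0
      simp
    · change eulerF (sW n) (FreeLieAlgebra.of ℚ none) = _
      simp [sW]
  · have := sF0_J n ⟨j, h0, h1⟩
    rw [this]
    ext
    · change ((1 : ℕ) : ℚ) * 0 = 0
      simp
    · change eulerF (sW n) (FreeLieAlgebra.of ℚ _) = _
      simp [sW]

lemma sympLie_gen (g : ℕ) (K : LieSubalgebra ℚ (SympLieAlgebra g))
    (hK : Set.range (fun j => sMk g (FreeLieAlgebra.of ℚ j)) ⊆ K) (x : SympLieAlgebra g) : x ∈ K := by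
  obtain ⟨u, rfl⟩ := sMk_surjective _ x
  induction u using free_induction with
  | h0 => rw [map_zero]; exact zero_mem K
  | hadd u v hu hv => rw [map_add]; exact add_mem hu hv
  | hsmul t u hu => rw [map_smul]; exact K.smul_mem t hu
  | hlie u v hu hv => rw [LieHom.map_lie]; exact K.lie_mem hu hv
  | hof y => exact hK ⟨y, rfl⟩

open PowerSeries

lemma sW_pos (n : ℕ) (p : ST n) : 1 ≤ sW n p := by
  rcases p with _ | p <;> simp [sW]

/-- Generators of weight `m + 1`. -/
def sW_equiv (n m : ℕ) : {p : ST n // sW n p = m + 1} ≃ SJ n ⊕ {_u : Unit // m = 0} where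
  toFun p := match p with
    | ⟨none, h⟩ => Sum.inr ⟨(), by simp only [sW] at h; omega⟩
    | ⟨some p, _⟩ => Sum.inl p.1
  invFun q := match q with
    | Sum.inl j => ⟨some (j, m), by simp only [sW]; omega⟩
    | Sum.inr u => ⟨none, by have := u.2; simp only [sW]; omega⟩
  left_inv := by
    rintro ⟨_ | ⟨j, k⟩, h⟩
    · rfl
    · simp only [sW] at h
      have : m = k := by omega
      subst this
      rfl
  right_inv := by rintro (j | ⟨⟨⟩, h⟩) <;> rfl

lemma sW_zero_empty (n : ℕ) : IsEmpty {p : ST n // sW n p = 0} :=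
  ⟨fun p => by have := sW_pos n p.1; have := p.2; omega⟩

lemma sW_locFin (n : ℕ) : LocFin (sW n) := by
  intro m
  rcases m with _ | m
  · have := sW_zero_empty n
    infer_instance
  · exact Finite.of_equiv _ (sW_equiv n m).symm

lemma card_SJ (n : ℕ) : Nat.card (SJ n) = 2 * n := by
  have h : (Finset.univ.filter (fun j : Fin (2 * (n + 1)) => j.1 ≠ 0 ∧ j.1 ≠ n + 1)) =
      (Finset.univ.erase ⟨0, by omega⟩).erase ⟨n + 1, by omega⟩ := by
    ext j
    simp only [Finset.mem_filter, Finset.mem_univ, true_and, Finset.mem_erase, ne_eq, Fin.ext_iff,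
      and_true]
    exact and_comm
  rw [Nat.card_eq_fintype_card, Fintype.card_subtype, h, Finset.card_erase_of_mem,
    Finset.card_erase_of_mem (Finset.mem_univ _), Finset.card_univ, Fintype.card_fin]
  · omega
  · simp

lemma card_sW (n m : ℕ) : Nat.card {p : ST n // sW n p = m + 1} = 2 * n + if m = 0 then 1 else 0 := by
  rw [Nat.card_congr (sW_equiv n m), Nat.card_sum, card_unit, card_SJ]

lemma genW_sW (n : ℕ) : (1 - X ^ 1) * (1 - genW (sW n)) =
    1 - C (2 * ((n + 1 : ℕ) : ℚ)) * X + X ^ 2 := by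
  have h0 : Nat.card {p : ST n // sW n p = 0} = 0 := by
    have := sW_zero_empty n
    exact Nat.card_of_isEmpty
  have key : genW (sW n) + X ^ 1 + X ^ 2 = C (2 * ((n + 1 : ℕ) : ℚ)) * X + genW (sW n) * X ^ 1 := by
    ext m
    simp only [map_add, coeff_C_mul, coeff_X_pow, coeff_X, coeff_mul_X_pow', genW, coeff_mk]
    rcases m with _ | _ | _ | m
    · simp [h0]
    · rw [card_sW]
      simp [h0]
      ring
    · simp [card_sW]
      try ring
    · simp [card_sW]
  linear_combination -key

/-- The structure result for `L_g`. -/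
lemma sympLie_dims (n : ℕ) : ∃ d : ℕ → ℕ,
    (∀ r, 1 ≤ r → FiniteDimensional ℚ (lcsQuotient (SympLieAlgebra (n + 1)) r) ∧
      Module.finrank ℚ (lcsQuotient (SympLieAlgebra (n + 1)) r) = d r) ∧
    genG d * (1 - C (2 * ((n + 1 : ℕ) : ℚ)) * X + X ^ 2) +
      X * derivative ℚ (1 - C (2 * ((n + 1 : ℕ) : ℚ)) * X + X ^ 2) = 0 := by
  obtain ⟨e, EA, he, hgen⟩ := sympLie_euler n
  have hfin : ∀ m, FiniteDimensional ℚ (eig (eulerF (sW n)) m) := fun m =>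
    eig_finite (ST n) (sW n) (sW_locFin n) (sW_pos n) m
  have hd : ∀ m, FiniteDimensional ℚ (eig EA m) ∧
      Module.finrank ℚ (eig EA m) = (if m = 1 then 1 else 0) + dimF (sW n) m := fun m =>
    eig_finrank EA e 1 (eulerF (sW n)) (s_comm n) he m
  refine ⟨fun m => Module.finrank ℚ (eig EA m), ?_, ?_⟩
  · intro r hr
    obtain ⟨φ⟩ := lcsQuotient_equiv EA (Set.range (fun j => sMk (n + 1) (FreeLieAlgebra.of ℚ j)))
      (by rintro _ ⟨j, rfl⟩; exact hgen j) (fun K hK u => sympLie_gen _ K hK u) r hr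
    have := (hd r).1
    exact ⟨Module.Finite.equiv φ, φ.finrank_eq.symm⟩
  · rw [genG_add _ (dimF (sW n)) 1 (fun m => (hd m).2),
      log_deriv_step 1 le_rfl _ _ (genW_sW n), witt _ _ (sW_locFin n) (sW_pos n), sub_self, mul_zero]

end SympLie

/-! ## Extraction of the formula -/

namespace SympLie
open PowerSeries

/-- Terms of the explicit formula. -/
noncomputable def vT (N : ℚ) (k q : ℕ) : ℚ :=
  if 2 * q ≤ k then (-1) ^ q * N ^ (k - 2 * q) * (Nat.choose (k - q) (k - 2 * q) : ℚ) *
    ((k : ℚ) / ((k - q : ℕ) : ℚ)) else 0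

lemma vT_pq (N : ℚ) (p q : ℕ) : vT N (p + 2 * q) q =
    (-1) ^ q * N ^ p * (Nat.choose (p + q) p : ℚ) * (((p : ℚ) + 2 * q) / ((p : ℚ) + q)) := by
  have h1 : p + 2 * q - 2 * q = p := by omega
  have h2 : p + 2 * q - q = p + q := by omega
  rw [vT, if_pos (by omega), h1, h2]
  push_cast
  rfl

lemma vT_zero (N : ℚ) (k : ℕ) (hk : 1 ≤ k) : vT N k 0 = N ^ k := by
  have := vT_pq N k 0
  have h : (k : ℚ) ≠ 0 := by positivity
  simpa [h] using this

lemma vT_eq_zero (N : ℚ) (k q : ℕ) (h : k < 2 * q) : vT N k q = 0 := if_neg (by omega)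

lemma choose_aux (p q : ℕ) :
    (Nat.choose (p + q + 2) (p + 1) : ℚ) * (((p : ℚ) + 1 + 2 * (q + 1)) / ((p : ℚ) + 1 + (q + 1))) =
    (Nat.choose (p + q + 1) p : ℚ) * (((p : ℚ) + 2 * (q + 1)) / ((p : ℚ) + (q + 1))) +
    (Nat.choose (p + q + 1) (p + 1) : ℚ) * (((p : ℚ) + 1 + 2 * q) / ((p : ℚ) + 1 + q)) := by
  have h1 : (Nat.choose (p + q + 2) (p + 1) : ℚ) = Nat.choose (p + q + 1) p +
      Nat.choose (p + q + 1) (p + 1) := by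
    rw [Nat.choose_succ_succ]; push_cast; rfl
  have h2 : (Nat.choose (p + q + 1) (p + 1) : ℚ) * (p + 1) =
      Nat.choose (p + q + 1) p * (q + 1) := by
    have := Nat.choose_succ_right_eq (p + q + 1) p
    have h3 : p + q + 1 - p = q + 1 := by omega
    rw [h3] at this
    exact_mod_cast this
  rw [h1]
  have hp : (0 : ℚ) ≤ p := by positivity
  have hq : (0 : ℚ) ≤ q := by positivity
  have e1 : (p : ℚ) + 1 + (q + 1) ≠ 0 := by positivity
  have e2 : (p : ℚ) + (q + 1) ≠ 0 := by positivity
  have e3 : (p : ℚ) + 1 + q ≠ 0 := by positivity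
  have e4 : (p : ℚ) + 1 ≠ 0 := by positivity
  have h3 : (Nat.choose (p + q + 1) (p + 1) : ℚ) = Nat.choose (p + q + 1) p * (q + 1) / (p + 1) := by
    rw [eq_div_iff e4, h2]
  rw [h3]
  field_simp
  ring

lemma vT_rec (N : ℚ) (k q : ℕ) (hk : 1 ≤ k) :
    vT N (k + 2) (q + 1) = N * vT N (k + 1) (q + 1) - vT N k q := by
  rcases lt_trichotomy (k + 2) (2 * (q + 1)) with h | h | h
  · rw [vT_eq_zero _ _ _ h, vT_eq_zero _ _ _ (by omega), vT_eq_zero _ _ _ (by omega)]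
    simp
  · have hk2 : k = 0 + 2 * q := by omega
    have h2 : k + 2 = 0 + 2 * (q + 1) := by omega
    rw [vT_eq_zero N (k + 1) _ (by omega), h2, hk2, vT_pq, vT_pq]
    have hq : (q : ℚ) ≠ 0 := by
      have : q ≠ 0 := by omega
      exact_mod_cast this
    have hq' : (q : ℚ) + 1 ≠ 0 := by positivity
    simp
    field_simp
    ring
  · obtain ⟨p, rfl⟩ : ∃ p, k = p + 1 + 2 * q := ⟨k - 1 - 2 * q, by omega⟩
    have e1 : p + 1 + 2 * q + 2 = (p + 1) + 2 * (q + 1) := by omega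
    have e2 : p + 1 + 2 * q + 1 = p + 2 * (q + 1) := by omega
    rw [e1, e2, vT_pq, vT_pq, vT_pq]
    have c := choose_aux p q
    have f1 : p + 1 + (q + 1) = p + q + 2 := by ring
    have f2 : p + (q + 1) = p + q + 1 := by ring
    have f3 : p + 1 + q = p + q + 1 := by ring
    rw [f1, f2, f3]
    push_cast at c ⊢
    linear_combination ((-1) ^ (q + 1) * N ^ (p + 1)) * c

/-- The explicit coefficients. -/
noncomputable def vA (N : ℚ) (k : ℕ) : ℚ := ∑ q ∈ Finset.range (k + 1), vT N k q

lemma vA_eq (N : ℚ) (k M : ℕ) (h : k + 1 ≤ M) : ∑ q ∈ Finset.range M, vT N k q = vA N k := by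
  refine (Finset.sum_subset (Finset.range_subset_range.2 h) ?_).symm
  intro q _ hq
  rw [Finset.mem_range] at hq
  exact vT_eq_zero _ _ _ (by omega)

lemma vA_rec (N : ℚ) (k : ℕ) (hk : 1 ≤ k) : vA N (k + 2) = N * vA N (k + 1) - vA N k := by
  rw [vA, Finset.sum_range_succ', vT_zero _ _ (by omega),
    ← vA_eq N (k + 1) (k + 2 + 1) (by omega), Finset.sum_range_succ' _ (k + 2),
    vT_zero _ _ (by omega), ← vA_eq N k (k + 2) (by omega)]
  simp only [vT_rec N k _ hk, Finset.sum_sub_distrib, ← Finset.mul_sum]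
  ring

lemma vA_one (N : ℚ) : vA N 1 = N := by
  simp [vA, Finset.sum_range_succ, vT]

lemma vA_two (N : ℚ) : vA N 2 = N ^ 2 - 2 := by
  simp [vA, Finset.sum_range_succ, vT]
  ring

lemma coeff_rec (N : ℚ) (G : PowerSeries ℚ) (h0 : coeff 0 G = 0)
    (h : G * (1 - C N * X + X ^ 2) + X * derivative ℚ (1 - C N * X + X ^ 2) = 0) (k : ℕ) :
    coeff (k + 1) G = vA N (k + 1) := by
  have hd : derivative ℚ (1 - C N * X + X ^ 2 : PowerSeries ℚ) = - C N + 2 * X := by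
    rw [map_add, map_sub, Derivation.leibniz, Derivation.leibniz_pow]
    simp
  rw [hd] at h
  have h' : G = C N * X - C (2 : ℚ) * (1 * X ^ 2) + C N * (G * X ^ 1) - G * X ^ 2 := by
    have : (C (2 : ℚ) : PowerSeries ℚ) = 2 := map_ofNat C 2
    rw [this]
    linear_combination h
  have hc : ∀ m, coeff m G = N * (if m = 1 then 1 else 0) - 2 * (if m = 2 then 1 else 0) +
      N * (if 1 ≤ m then coeff (m - 1) G else 0) - (if 2 ≤ m then coeff (m - 2) G else 0) := by
    intro m
    conv_lhs => rw [h']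
    simp only [map_add, map_sub, coeff_C_mul, coeff_mul_X_pow', coeff_X, coeff_one]
    rcases m with _ | _ | _ | m <;> simp
  induction k using Nat.strong_induction_on with
  | _ k ih =>
    rcases k with _ | _ | k
    · rw [hc, vA_one]; simp [h0]
    · have h1 := ih 0 (by omega)
      rw [hc, vA_two]
      simp only [zero_add, vA_one] at h1
      simp [h0, h1]
      ring
    · have h1 := ih k (by omega)
      have h2 := ih (k + 1) (by omega)
      rw [vA_rec N (k + 1) (by omega), hc, ← h1, ← h2]
      simp

lemma inner_sum (N : ℚ) (r k : ℕ) (hk : 1 ≤ k) (hkr : k ≤ r) :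
    ∑ pq ∈ (Finset.range (r + 1) ×ˢ Finset.range (r + 1)).filter
        (fun pq => pq.1 + 2 * pq.2 = k ∧ 1 ≤ pq.1 + pq.2),
      (-1 : ℚ) ^ pq.2 * N ^ pq.1 * (Nat.choose (pq.1 + pq.2) pq.1 : ℚ) / (pq.1 + pq.2 : ℚ) =
    vA N k / k := by
  have hk0 : (k : ℚ) ≠ 0 := by positivity
  rw [Finset.sum_filter, Finset.sum_product_right, ← vA_eq N k (r + 1) (by omega), Finset.sum_div]
  refine Finset.sum_congr rfl fun q _ => ?_
  simp only
  by_cases hq : 2 * q ≤ k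
  · obtain ⟨p, rfl⟩ : ∃ p, k = p + 2 * q := ⟨k - 2 * q, by omega⟩
    rw [Finset.sum_eq_single p, if_pos ⟨rfl, by omega⟩, vT_pq]
    · push_cast at hk0 ⊢
      have hpq : (p : ℚ) + q ≠ 0 := by
        have : p + q ≠ 0 := by omega
        exact_mod_cast this
      rw [mul_div_assoc', div_div, mul_div_mul_right _ _ hk0]
    · intro p' _ hp'
      exact if_neg (by omega)
    · intro hp
      rw [Finset.mem_range] at hp
      omega
  · rw [vT_eq_zero _ _ _ (by omega), zero_div]
    refine Finset.sum_eq_zero fun p _ => if_neg (by omega)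

lemma formula (N : ℚ) (d : ℕ → ℕ)
    (h : genG d * (1 - C N * X + X ^ 2) + X * derivative ℚ (1 - C N * X + X ^ 2) = 0)
    (r : ℕ) (hr : 1 ≤ r) : (d r : ℚ) =
      ∑ ℓ ∈ r.divisors, ((ArithmeticFunction.moebius ℓ : ℚ) / (ℓ : ℚ)) *
          ∑ pq ∈ (Finset.range (r + 1) ×ˢ Finset.range (r + 1)).filter
              (fun pq => pq.1 + 2 * pq.2 = r / ℓ ∧ 1 ≤ pq.1 + pq.2),
            (-1 : ℚ) ^ pq.2 * N ^ pq.1 *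
              (Nat.choose (pq.1 + pq.2) pq.1 : ℚ) / (pq.1 + pq.2 : ℚ) := by
  have hG : ∀ k > 0, ∑ m ∈ Nat.divisors k, ((m : ℕ) : ℚ) * (d m : ℚ) = vA N k := by
    intro k hk
    obtain ⟨j, rfl⟩ : ∃ j, k = j + 1 := ⟨k - 1, by omega⟩
    rw [← coeff_rec N (genG d) (by simp [genG]) h j, genG, coeff_mk]
  have hM := (ArithmeticFunction.sum_eq_iff_sum_mul_moebius_eq
    (f := fun m : ℕ => (m : ℚ) * (d m : ℚ)) (g := vA N)).1 hG r hr
  rw [Nat.sum_divisorsAntidiagonal (fun a b => (ArithmeticFunction.moebius a : ℚ) * vA N b)] at hM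
  have hr0 : (r : ℚ) ≠ 0 := by positivity
  have : (d r : ℚ) = ((r : ℚ) * d r) / r := by field_simp
  rw [this, ← hM, Finset.sum_div]
  refine Finset.sum_congr rfl fun l hl => ?_
  obtain ⟨⟨c, rfl⟩, hne⟩ := Nat.mem_divisors.1 hl
  have hl0 : 0 < l := Nat.pos_of_ne_zero (by rintro rfl; simp at hne)
  have hc0 : 0 < c := Nat.pos_of_ne_zero (by rintro rfl; simp at hne)
  rw [Nat.mul_div_cancel_left _ hl0, inner_sum N (l * c) c hc0 (Nat.le_mul_of_pos_left _ hl0)]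
  push_cast
  field_simp

end SympLie

/-- For `g ≥ 1`, `n = 2g` and every `r ≥ 1`, the quotient `γ_r L_g / γ_{r+1} L_g` of
consecutive terms of the lower central series of `L_g` is a finite-dimensional `ℚ`-vector
space of dimension
`ε_r = ∑_{ℓ ∣ r} (μ(ℓ)/ℓ) · ∑_{p+2q = r/ℓ, p+q ≥ 1} (−1)^q n^p C(p+q,p)/(p+q)`. -/
theorem dimension_formula_symp_lie_algebra (g : ℕ) (hg : 1 ≤ g) (r : ℕ) (hr : 1 ≤ r) :
    FiniteDimensional ℚ (lcsQuotient (SympLieAlgebra g) r) ∧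
    (Module.finrank ℚ (lcsQuotient (SympLieAlgebra g) r) : ℚ) =
      ∑ ℓ ∈ r.divisors,
        ((ArithmeticFunction.moebius ℓ : ℚ) / (ℓ : ℚ)) *
          ∑ pq ∈ (Finset.range (r + 1) ×ˢ Finset.range (r + 1)).filter
              (fun pq => pq.1 + 2 * pq.2 = r / ℓ ∧ 1 ≤ pq.1 + pq.2),
            (-1 : ℚ) ^ pq.2 * (2 * g : ℚ) ^ pq.1 *
              (Nat.choose (pq.1 + pq.2) pq.1 : ℚ) / (pq.1 + pq.2 : ℚ) := by
  obtain ⟨n, rfl⟩ : ∃ n, g = n + 1 := ⟨g - 1, by omega⟩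
  obtain ⟨d, hd, hG⟩ := SympLie.sympLie_dims n
  refine ⟨(hd r hr).1, ?_⟩
  rw [(hd r hr).2]
  exact SympLie.formula _ d hG r hr
end

section
/- Let g ≥ 1 and for r ≥ 1 let ε_r = dim_ℚ(γ_r L_g / γ_{r+1} L_g). Then for every R ≥ 1 the polynomial/power-series congruence ∏_{r=1}^{R} (1 − z^r)^{ε_r} ≡ 1 − 2g·z + z² (mod z^{R+1}) holds; equivalently, for every m with 1 ≤ m ≤ R, the coefficient of z^m in ∏_{r=1}^{R} (1 − z^r)^{ε_r} equals the coefficient of z^m in 1 − 2g·z + z². -/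
namespace SympPBW

/-- Trivial square-zero extension of a Lie algebra by its adjoint module. -/
def Dual (L : Type) : Type := L × L

namespace Dual
variable (L : Type) [LieRing L] [LieAlgebra ℚ L]

instance : AddCommGroup (Dual L) := inferInstanceAs (AddCommGroup (L × L))
instance : Module ℚ (Dual L) := inferInstanceAs (Module ℚ (L × L))

instance : LieRing (Dual L) where
  bracket a b := (⁅a.1, b.1⁆, ⁅a.2, b.1⁆ + ⁅a.1, b.2⁆)
  add_lie := by
    rintro ⟨a, a'⟩ ⟨b, b'⟩ ⟨c, c'⟩
    refine Prod.ext ?_ ?_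
    · exact add_lie a b c
    · change ⁅a' + b', c⁆ + ⁅a + b, c'⁆ = (⁅a', c⁆ + ⁅a, c'⁆) + (⁅b', c⁆ + ⁅b, c'⁆)
      rw [add_lie, add_lie]; abel
  lie_add := by
    rintro ⟨a, a'⟩ ⟨b, b'⟩ ⟨c, c'⟩
    refine Prod.ext ?_ ?_
    · exact lie_add a b c
    · change ⁅a', b + c⁆ + ⁅a, b' + c'⁆ = (⁅a', b⁆ + ⁅a, b'⁆) + (⁅a', c⁆ + ⁅a, c'⁆)
      rw [lie_add, lie_add]; abel
  lie_self := by
    rintro ⟨a, a'⟩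
    refine Prod.ext ?_ ?_
    · exact lie_self a
    · change ⁅a', a⁆ + ⁅a, a'⁆ = 0
      rw [← lie_skew]; abel
  leibniz_lie := by
    rintro ⟨a, a'⟩ ⟨b, b'⟩ ⟨c, c'⟩
    refine Prod.ext ?_ ?_
    · exact leibniz_lie a b c
    · change ⁅a', ⁅b, c⁆⁆ + ⁅a, ⁅b', c⁆ + ⁅b, c'⁆⁆ =
        (⁅⁅a', b⁆ + ⁅a, b'⁆, c⁆ + ⁅⁅a, b⁆, c'⁆) + (⁅b', ⁅a, c⁆⁆ + ⁅b, ⁅a', c⁆ + ⁅a, c'⁆⁆)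
      simp only [add_lie, lie_add]
      rw [leibniz_lie a' b c, leibniz_lie a b' c, leibniz_lie a b c']; abel

instance : LieAlgebra ℚ (Dual L) where
  lie_smul := by
    rintro t ⟨a, a'⟩ ⟨b, b'⟩
    refine Prod.ext ?_ ?_
    · exact lie_smul t a b
    · change ⁅a', t • b⁆ + ⁅a, t • b'⁆ = t • (⁅a', b⁆ + ⁅a, b'⁆)
      rw [lie_smul, lie_smul, smul_add]

/-- First projection. -/
def fst : Dual L →ₗ⁅ℚ⁆ L where
  toFun a := a.1
  map_add' _ _ := rfl
  map_smul' _ _ := rfl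
  map_lie' := rfl

/-- Second projection. -/
def snd : Dual L →ₗ[ℚ] L where
  toFun a := a.2
  map_add' _ _ := rfl
  map_smul' _ _ := rfl

end Dual

open FreeLieAlgebra

theorem exists_deriv {X : Type} (f : X → FreeLieAlgebra ℚ X) :
    ∃ D : FreeLieAlgebra ℚ X →ₗ[ℚ] FreeLieAlgebra ℚ X,
      (∀ a b, D ⁅a, b⁆ = ⁅D a, b⁆ + ⁅a, D b⁆) ∧ ∀ x, D (of ℚ x) = f x := by
  let F : X → Dual (FreeLieAlgebra ℚ X) := fun x => (of ℚ x, f x)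
  let h : FreeLieAlgebra ℚ X →ₗ⁅ℚ⁆ Dual (FreeLieAlgebra ℚ X) := lift ℚ F
  have h1 : ∀ a, (h a).1 = a := by
    intro a
    have : (Dual.fst _).comp h = LieHom.id := by
      ext x
      change (h (of ℚ x)).1 = of ℚ x
      simp only [h, lift_of_apply]; rfl
    exact congrArg (fun k => k a) this
  refine ⟨(Dual.snd _).comp h.toLinearMap, ?_, ?_⟩
  · intro a b
    change (h ⁅a, b⁆).2 = ⁅(h a).2, b⁆ + ⁅a, (h b).2⁆
    rw [LieHom.map_lie]
    change ⁅(h a).2, (h b).1⁆ + ⁅(h a).1, (h b).2⁆ = _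
    rw [h1, h1]
  · intro x
    change (h (of ℚ x)).2 = f x
    simp only [h, lift_of_apply]; rfl

theorem free_sub_top {X : Type} (S : LieSubalgebra ℚ (FreeLieAlgebra ℚ X))
    (h : ∀ x, of ℚ x ∈ S) (a : FreeLieAlgebra ℚ X) : a ∈ S := by
  let k : FreeLieAlgebra ℚ X →ₗ⁅ℚ⁆ S := lift ℚ fun x => ⟨of ℚ x, h x⟩
  have : S.incl.comp k = LieHom.id := by
    ext x; simp [k]
  have h2 : ((k a : S) : FreeLieAlgebra ℚ X) = a := congrArg (fun k => k a) this
  rw [← h2]; exact (k a).2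

theorem deriv_ext {X L : Type} [LieRing L] [LieAlgebra ℚ L] (φ : FreeLieAlgebra ℚ X →ₗ⁅ℚ⁆ L)
    (A B : FreeLieAlgebra ℚ X →ₗ[ℚ] L)
    (hA : ∀ a b, A ⁅a, b⁆ = ⁅A a, φ b⁆ + ⁅φ a, A b⁆)
    (hB : ∀ a b, B ⁅a, b⁆ = ⁅B a, φ b⁆ + ⁅φ a, B b⁆)
    (h : ∀ x, A (of ℚ x) = B (of ℚ x)) (a : FreeLieAlgebra ℚ X) : A a = B a := by
  let S : LieSubalgebra ℚ (FreeLieAlgebra ℚ X) :=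
    { LinearMap.eqLocus A B with
      lie_mem' := by
        intro a b ha hb
        change A a = B a at ha
        change A b = B b at hb
        change A _ = B _
        rw [hA, hB, ha, hb] }
  exact free_sub_top S h a

/-- The Lie algebra `F ⋊ ℚ y` where `y` acts by `D` -/
def SD {F : Type} [LieRing F] [LieAlgebra ℚ F] (_D : LieDerivation ℚ F F) : Type := F × ℚ

namespace SD
variable {F : Type} [LieRing F] [LieAlgebra ℚ F] (D : LieDerivation ℚ F F)

instance : AddCommGroup (SD D) := inferInstanceAs (AddCommGroup (F × ℚ))
instance : Module ℚ (SD D) := inferInstanceAs (Module ℚ (F × ℚ))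

theorem der_lie (a b : F) : D ⁅a, b⁆ = ⁅D a, b⁆ + ⁅a, D b⁆ := by
  rw [D.apply_lie_eq_add, add_comm]

instance : LieRing (SD D) where
  bracket a b := (⁅a.1, b.1⁆ + (a.2 • D b.1 - b.2 • D a.1), 0)
  add_lie := by
    rintro ⟨a, a'⟩ ⟨b, b'⟩ ⟨c, c'⟩
    refine Prod.ext ?_ (add_zero (0:ℚ)).symm
    change ⁅a + b, c⁆ + ((a' + b') • D c - c' • D (a + b)) =
      (⁅a, c⁆ + (a' • D c - c' • D a)) + (⁅b, c⁆ + (b' • D c - c' • D b))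
    rw [add_lie, map_add, add_smul, smul_add]; abel
  lie_add := by
    rintro ⟨a, a'⟩ ⟨b, b'⟩ ⟨c, c'⟩
    refine Prod.ext ?_ (add_zero (0:ℚ)).symm
    change ⁅a, b + c⁆ + (a' • D (b + c) - (b' + c') • D a) =
      (⁅a, b⁆ + (a' • D b - b' • D a)) + (⁅a, c⁆ + (a' • D c - c' • D a))
    rw [lie_add, map_add, add_smul, smul_add]; abel
  lie_self := by
    rintro ⟨a, a'⟩
    refine Prod.ext ?_ rfl
    change ⁅a, a⁆ + (a' • D a - a' • D a) = 0
    simp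
  leibniz_lie := by
    rintro ⟨a, a'⟩ ⟨b, b'⟩ ⟨c, c'⟩
    refine Prod.ext ?_ (add_zero (0:ℚ)).symm
    change ⁅a, ⁅b, c⁆ + (b' • D c - c' • D b)⁆ +
        (a' • D (⁅b, c⁆ + (b' • D c - c' • D b)) - (0:ℚ) • D a) =
      (⁅⁅a, b⁆ + (a' • D b - b' • D a), c⁆ +
        ((0:ℚ) • D c - c' • D (⁅a, b⁆ + (a' • D b - b' • D a)))) +
      (⁅b, ⁅a, c⁆ + (a' • D c - c' • D a)⁆ +
        (b' • D (⁅a, c⁆ + (a' • D c - c' • D a)) - (0:ℚ) • D b))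
    simp only [lie_add, add_lie, map_add, map_sub, map_smul, lie_sub, sub_lie, lie_smul, smul_lie,
      der_lie, leibniz_lie a b c, zero_smul, smul_sub, smul_add]
    rw [← lie_skew b (D a)]
    rw [smul_comm c' a', smul_comm c' b', smul_comm a' b']
    simp only [smul_neg]
    abel

instance : LieAlgebra ℚ (SD D) where
  lie_smul := by
    rintro t ⟨a, a'⟩ ⟨b, b'⟩
    refine Prod.ext ?_ (smul_zero t).symm
    change ⁅a, t • b⁆ + (a' • D (t • b) - (t • b') • D a) = t • (⁅a, b⁆ + (a' • D b - b' • D a))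
    rw [lie_smul, map_smul, smul_add, smul_sub, smul_comm a' t, smul_assoc]

/-- underlying linear equivalence -/
def toProd : SD D ≃ₗ[ℚ] F × ℚ := LinearEquiv.refl ℚ (F × ℚ)

/-- inclusion of `F` -/
def inl : F →ₗ⁅ℚ⁆ SD D where
  toFun a := (a, 0)
  map_add' a b := Prod.ext rfl (add_zero (0:ℚ)).symm
  map_smul' t b := Prod.ext rfl (smul_zero t).symm
  map_lie' := by
    intro a b
    refine Prod.ext ?_ rfl
    change ⁅a, b⁆ = ⁅a, b⁆ + ((0:ℚ) • D b - (0:ℚ) • D a)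
    simp

/-- the element `y` -/
def y : SD D := (0, 1)

theorem lie_def (a b : SD D) : ⁅a, b⁆ = (⁅a.1, b.1⁆ + (a.2 • D b.1 - b.2 • D a.1), (0:ℚ)) := rfl

theorem y_lie (a : F) : ⁅y D, inl D a⁆ = inl D (D a) := by
  refine Prod.ext ?_ rfl
  change ⁅(0:F), a⁆ + ((1:ℚ) • D a - (0:ℚ) • D (0:F)) = D a
  simp

variable {D}
/-- universal property -/
def desc {L : Type} [LieRing L] [LieAlgebra ℚ L] (φ : F →ₗ⁅ℚ⁆ L) (u : L)
    (h : ∀ a, ⁅u, φ a⁆ = φ (D a)) : SD D →ₗ⁅ℚ⁆ L where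
  toFun a := φ a.1 + a.2 • u
  map_add' a b := by
    change φ (a.1 + b.1) + (a.2 + b.2) • u = _
    rw [map_add, add_smul]; abel
  map_smul' t a := by
    change φ (t • a.1) + (t • a.2) • u = t • _
    rw [map_smul, smul_add, smul_assoc]
  map_lie' := by
    rintro ⟨a, s⟩ ⟨b, t⟩
    change φ (⁅a, b⁆ + (s • D b - t • D a)) + (0:ℚ) • u = ⁅φ a + s • u, φ b + t • u⁆
    simp only [map_add, map_sub, map_smul, LieHom.map_lie, add_lie, lie_add, lie_smul, smul_lie,
      lie_self, h, zero_smul, smul_zero, add_zero]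
    have hs : t • ⁅φ a, u⁆ = -(t • φ (D a)) := by
      rw [← lie_skew, h]; exact smul_neg t _
    rw [hs]
    abel

@[simp] theorem desc_inl {L : Type} [LieRing L] [LieAlgebra ℚ L] (φ : F →ₗ⁅ℚ⁆ L) (u : L)
    (h : ∀ a, ⁅u, φ a⁆ = φ (D a)) (a : F) : desc φ u h (inl D a) = φ a := by
  change φ a + (0:ℚ) • u = _
  simp
@[simp] theorem desc_y {L : Type} [LieRing L] [LieAlgebra ℚ L] (φ : F →ₗ⁅ℚ⁆ L) (u : L)
    (h : ∀ a, ⁅u, φ a⁆ = φ (D a)) : desc φ u h (y D) = u := by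
  change φ 0 + (1:ℚ) • u = _
  simp

theorem decomp (a : SD D) : a = inl D a.1 + a.2 • y D := by
  refine Prod.ext ?_ ?_
  · change a.1 = a.1 + a.2 • (0:F)
    simp
  · change a.2 = 0 + a.2 * 1
    simp

theorem hom_ext' {L : Type} [LieRing L] [LieAlgebra ℚ L] {f k : SD D →ₗ⁅ℚ⁆ L}
    (h1 : ∀ a, f (inl D a) = k (inl D a)) (h2 : f (y D) = k (y D)) : f = k := by
  ext a
  rw [decomp a, map_add, map_add, map_smul, map_smul, h1, h2]

/-- Extension of an Euler operator to the semidirect product. -/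
def eul (D : LieDerivation ℚ F F) (E : F →ₗ[ℚ] F) (d : ℚ) : SD D →ₗ[ℚ] SD D :=
  (toProd D).symm.toLinearMap ∘ₗ (LinearMap.prodMap E (d • LinearMap.id)) ∘ₗ
    (toProd D).toLinearMap

theorem eul_apply (E : F →ₗ[ℚ] F) (d : ℚ) (a : SD D) : eul D E d a = (E a.1, d * a.2) := rfl

@[simp] theorem eul_inl (E : F →ₗ[ℚ] F) (d : ℚ) (a : F) : eul D E d (inl D a) = inl D (E a) :=
  Prod.ext rfl (mul_zero d)

@[simp] theorem eul_y (E : F →ₗ[ℚ] F) (d : ℚ) : eul D E d (y D) = d • y D := by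
  refine Prod.ext ?_ rfl
  change E 0 = d • (0:F)
  simp

theorem eul_lie (E : F →ₗ[ℚ] F) (d : ℚ) (hE : ∀ a b, E ⁅a, b⁆ = ⁅E a, b⁆ + ⁅a, E b⁆)
    (hED : ∀ a, E (D a) = D (E a) + d • D a) (a b : SD D) :
    eul D E d ⁅a, b⁆ = ⁅eul D E d a, b⁆ + ⁅a, eul D E d b⁆ := by
  obtain ⟨a, s⟩ := a
  obtain ⟨b, t⟩ := b
  refine Prod.ext ?_ ?_
  · change E (⁅a, b⁆ + (s • D b - t • D a)) =
      (⁅E a, b⁆ + ((d * s) • D b - t • D (E a))) + (⁅a, E b⁆ + (s • D (E b) - (d * t) • D a))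
    simp only [map_add, map_sub, map_smul, hE, hED, smul_add, smul_smul]
    rw [mul_comm s d, mul_comm t d]
    abel
  · change d * 0 = (0:ℚ) + 0
    simp

end SD

/-- Splitting of eigenspaces. -/
theorem eig_split {L F : Type} [AddCommGroup L] [Module ℚ L] [AddCommGroup F] [Module ℚ F]
    (e : L ≃ₗ[ℚ] F × ℚ) (EL : L →ₗ[ℚ] L) (EF : F →ₗ[ℚ] F) (d : ℕ)
    (h : ∀ a, e (EL a) = (EF (e a).1, (d:ℚ) * (e a).2)) (r : ℕ)
    (hfin : FiniteDimensional ℚ (Module.End.eigenspace EF (r:ℚ))) :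
    FiniteDimensional ℚ (Module.End.eigenspace EL (r:ℚ)) ∧
    Module.finrank ℚ (Module.End.eigenspace EL (r:ℚ)) =
      Module.finrank ℚ (Module.End.eigenspace EF (r:ℚ)) + if r = d then 1 else 0 := by
  have key : (Module.End.eigenspace EL (r:ℚ)).map e.toLinearMap =
      (Module.End.eigenspace EF (r:ℚ)).prod (if r = d then ⊤ else ⊥) := by
    ext ⟨u, v⟩
    rw [Submodule.mem_map_equiv, Module.End.mem_eigenspace_iff, Submodule.mem_prod,
      Module.End.mem_eigenspace_iff, ← e.injective.eq_iff, h]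
    simp only [LinearEquiv.apply_symm_apply, map_smul, Prod.smul_mk, Prod.mk.injEq, smul_eq_mul]
    refine and_congr Iff.rfl ?_
    split_ifs with hr
    · simp [hr]
    · have : (d:ℚ) ≠ r := by exact_mod_cast Ne.symm hr
      simp [this]
  let q : Submodule ℚ ℚ := if r = d then ⊤ else ⊥
  let e2 : ((Module.End.eigenspace EF (r:ℚ)).prod q) ≃ₗ[ℚ] (Module.End.eigenspace EF (r:ℚ)) × q :=
    { toFun := fun a => (⟨a.1.1, a.2.1⟩, ⟨a.1.2, a.2.2⟩)
      invFun := fun a => ⟨(a.1.1, a.2.1), ⟨a.1.2, a.2.2⟩⟩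
      map_add' := fun _ _ => rfl
      map_smul' := fun _ _ => rfl
      left_inv := fun _ => rfl
      right_inv := fun _ => rfl }
  have e1 : (Module.End.eigenspace EL (r:ℚ)) ≃ₗ[ℚ] (Module.End.eigenspace EF (r:ℚ)) × q :=
    (e.submoduleMap _).trans ((LinearEquiv.ofEq _ _ key).trans e2)
  refine ⟨e1.symm.finiteDimensional, ?_⟩
  rw [e1.finrank_eq, Module.finrank_prod]
  congr 1
  by_cases hr : r = d
  · have hq : q = ⊤ := if_pos hr
    rw [hq, if_pos hr, finrank_top, Module.finrank_self]
  · have hq : q = ⊥ := if_neg hr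
    rw [hq, if_neg hr, finrank_bot]

end SympPBW

namespace SympPBW
open FreeLieAlgebra

theorem exists_lieDer {X : Type} (f : X → FreeLieAlgebra ℚ X) :
    ∃ D : LieDerivation ℚ (FreeLieAlgebra ℚ X) (FreeLieAlgebra ℚ X), ∀ x, D (of ℚ x) = f x := by
  obtain ⟨D, h1, h2⟩ := exists_deriv f
  refine ⟨⟨D, ?_⟩, h2⟩
  intro a b
  rw [h1, ← lie_skew (D a) b]; abel

/-- Euler derivation of the free Lie algebra with weights `d`. -/
noncomputable def eul {X : Type} (d : X → ℕ) : FreeLieAlgebra ℚ X →ₗ[ℚ] FreeLieAlgebra ℚ X :=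
  (exists_deriv fun x => (d x : ℚ) • of ℚ x).choose

theorem eul_lie {X : Type} (d : X → ℕ) (a b) : eul d ⁅a, b⁆ = ⁅eul d a, b⁆ + ⁅a, eul d b⁆ :=
  (exists_deriv fun x => (d x : ℚ) • of ℚ x).choose_spec.1 a b

theorem eul_of {X : Type} (d : X → ℕ) (x : X) : eul d (of ℚ x) = (d x : ℚ) • of ℚ x :=
  (exists_deriv fun x => (d x : ℚ) • of ℚ x).choose_spec.2 x

/-- commutation of Euler with D on generators extends -/
theorem eul_comm {X : Type} (d : X → ℕ) (D : LieDerivation ℚ (FreeLieAlgebra ℚ X) (FreeLieAlgebra ℚ X))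
    (c : ℚ) (h : ∀ x, eul d (D (of ℚ x)) = D (eul d (of ℚ x)) + c • D (of ℚ x)) (a) :
    eul d (D a) = D (eul d a) + c • D a := by
  have := deriv_ext (LieHom.id : FreeLieAlgebra ℚ X →ₗ⁅ℚ⁆ FreeLieAlgebra ℚ X)
    ((eul d).comp (D : FreeLieAlgebra ℚ X →ₗ[ℚ] FreeLieAlgebra ℚ X) -
      (D : FreeLieAlgebra ℚ X →ₗ[ℚ] FreeLieAlgebra ℚ X).comp (eul d))
    (c • (D : FreeLieAlgebra ℚ X →ₗ[ℚ] FreeLieAlgebra ℚ X)) ?_ ?_ ?_ a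
  · change eul d (D a) - D (eul d a) = c • D a at this
    rw [← this]; abel
  · intro a b
    change eul d (D ⁅a, b⁆) - D (eul d ⁅a, b⁆) = ⁅eul d (D a) - D (eul d a), b⁆ +
      ⁅a, eul d (D b) - D (eul d b)⁆
    simp only [SD.der_lie, eul_lie, map_add, sub_lie, lie_sub]
    abel
  · intro a b
    change c • D ⁅a, b⁆ = ⁅c • D a, b⁆ + ⁅a, c • D b⁆
    rw [SD.der_lie, smul_add, smul_lie, lie_smul]
  · intro x
    change eul d (D _) - D (eul d _) = c • D _
    rw [h]; abel

section eig
variable {L : Type} [LieRing L] [LieAlgebra ℚ L] (E : L →ₗ[ℚ] L)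

theorem eig_lie (hE : ∀ a b, E ⁅a, b⁆ = ⁅E a, b⁆ + ⁅a, E b⁆) {m n : ℕ} {a b : L}
    (ha : a ∈ Module.End.eigenspace E (m:ℚ)) (hb : b ∈ Module.End.eigenspace E (n:ℚ)) :
    ⁅a, b⁆ ∈ Module.End.eigenspace E ((m + n : ℕ):ℚ) := by
  rw [Module.End.mem_eigenspace_iff] at *
  rw [hE, ha, hb, smul_lie, lie_smul, Nat.cast_add, add_smul]

/-- the part of degree at least N -/
def tail (N : ℕ) : Submodule ℚ L := ⨆ n : {n : ℕ // N ≤ n}, Module.End.eigenspace E ((n : ℕ) : ℚ)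

theorem mem_tail {N n : ℕ} (h : N ≤ n) {a : L} (ha : a ∈ Module.End.eigenspace E (n : ℚ)) :
    a ∈ tail E N :=
  Submodule.mem_iSup_of_mem (p := fun n : {n : ℕ // N ≤ n} => Module.End.eigenspace E ((n : ℕ) : ℚ))
    ⟨n, h⟩ ha

theorem tail_lie (hE : ∀ a b, E ⁅a, b⁆ = ⁅E a, b⁆ + ⁅a, E b⁆) {M N : ℕ} {a b : L}
    (ha : a ∈ tail E M) (hb : b ∈ tail E N) : ⁅a, b⁆ ∈ tail E (M + N) := by
  induction ha using Submodule.iSup_induction' with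
  | zero => simp
  | add u v _ _ hu hv => rw [add_lie]; exact add_mem hu hv
  | mem m u hu =>
    induction hb using Submodule.iSup_induction' with
    | zero => simp
    | add v w _ _ hv hw => rw [lie_add]; exact add_mem hv hw
    | mem n v hv => exact mem_tail E (Nat.add_le_add m.2 n.2) (eig_lie E hE hu hv)

theorem tail_anti {M N : ℕ} (h : M ≤ N) : tail E N ≤ tail E M :=
  iSup_le fun n _ ha => mem_tail E (h.trans n.2) ha

theorem eig_disj {r N : ℕ} (h : r < N) : Disjoint (Module.End.eigenspace E (r : ℚ)) (tail E N) := by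
  refine (Module.End.eigenspaces_iSupIndep E (r:ℚ)).mono_right ?_
  refine iSup_le fun n => ?_
  have : ((n:ℕ):ℚ) ≠ r := by
    have := n.2
    have h3 : (n:ℕ) ≠ r := by omega
    exact_mod_cast h3
  exact le_iSup₂ (f := fun (j : ℚ) (_ : j ≠ r) => Module.End.eigenspace E j) ((n:ℕ):ℚ) this

end eig

theorem free_low {X : Type} (d : X → ℕ) (N : ℕ) (hd : ∀ x, N ≤ d x) (r : ℕ) (hr : r < N) :
    Module.End.eigenspace (eul d) (r : ℚ) = ⊥ := by
  have htop : tail (eul d) N = ⊤ := by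
    let S : LieSubalgebra ℚ (FreeLieAlgebra ℚ X) :=
      { tail (eul d) N with
        lie_mem' := fun ha hb => tail_anti _ (Nat.le_add_right N N) (tail_lie _ (eul_lie d) ha hb) }
    refine eq_top_iff.2 fun a _ => free_sub_top S (fun x => ?_) a
    exact mem_tail _ (hd x) (by rw [Module.End.mem_eigenspace_iff, eul_of])
  have := eig_disj (eul d) hr
  rwa [htop, disjoint_top] at this

theorem elim {X : Type} (d : X → ℕ) (y : X) :
    ∃ e : FreeLieAlgebra ℚ X ≃ₗ[ℚ] FreeLieAlgebra ℚ (ℕ × {x : X // x ≠ y}) × ℚ,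
      ∀ a, e (eul d a) = (eul (fun p : ℕ × {x : X // x ≠ y} => p.1 * d y + d p.2) (e a).1,
        (d y : ℚ) * (e a).2) := by
  classical
  set d' : ℕ × {x : X // x ≠ y} → ℕ := fun p => p.1 * d y + d p.2 with hd'
  obtain ⟨D, hD⟩ := exists_lieDer fun p : ℕ × {x : X // x ≠ y} => of ℚ (p.1 + 1, p.2)
  let f : FreeLieAlgebra ℚ X →ₗ⁅ℚ⁆ SD D :=
    lift ℚ fun x => if h : x = y then SD.y D else SD.inl D (of ℚ (0, ⟨x, h⟩))
  have fy : f (of ℚ y) = SD.y D := by simp [f]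
  have fx : ∀ x : {x : X // x ≠ y}, f (of ℚ x.1) = SD.inl D (of ℚ (0, x)) := by
    rintro ⟨x, hx⟩; simp [f, hx]
  let φ : FreeLieAlgebra ℚ (ℕ × {x : X // x ≠ y}) →ₗ⁅ℚ⁆ FreeLieAlgebra ℚ X :=
    lift ℚ fun p => (fun u => ⁅of ℚ y, u⁆)^[p.1] (of ℚ p.2.1)
  have φof : ∀ p, φ (of ℚ p) = (fun u => ⁅of ℚ y, u⁆)^[p.1] (of ℚ p.2.1) := by
    intro p; simp only [φ, lift_of_apply]
  have hφ : ∀ a, ⁅of ℚ y, φ a⁆ = φ (D a) := by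
    refine deriv_ext φ ((LieAlgebra.ad ℚ _ (of ℚ y)).comp φ.toLinearMap)
      (φ.toLinearMap.comp (D : _ →ₗ[ℚ] _)) ?_ ?_ ?_
    · intro a b
      change ⁅of ℚ y, φ ⁅a, b⁆⁆ = ⁅⁅of ℚ y, φ a⁆, φ b⁆ + ⁅φ a, ⁅of ℚ y, φ b⁆⁆
      rw [LieHom.map_lie, leibniz_lie]
    · intro a b
      change φ (D ⁅a, b⁆) = ⁅φ (D a), φ b⁆ + ⁅φ a, φ (D b)⁆
      rw [SD.der_lie, map_add, LieHom.map_lie, LieHom.map_lie]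
    · intro p
      change ⁅of ℚ y, φ (of ℚ p)⁆ = φ (D (of ℚ p))
      rw [hD, φof, φof, Function.iterate_succ_apply']
  let k : SD D →ₗ⁅ℚ⁆ FreeLieAlgebra ℚ X := SD.desc φ (of ℚ y) hφ
  have hkf : k.comp f = LieHom.id := by
    ext x
    by_cases h : x = y
    · subst h
      change k (f _) = _
      rw [fy]; simp [k]
    · change k (f _) = _
      rw [fx ⟨x, h⟩]; simp [k, φof]
  have hfφ : ∀ (n : ℕ) (x), f ((fun u => ⁅of ℚ y, u⁆)^[n] (of ℚ x.1)) = SD.inl D (of ℚ (n, x)) := by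
    intro n x
    induction n with
    | zero => exact fx x
    | succ n ih => rw [Function.iterate_succ_apply', LieHom.map_lie, ih, fy, SD.y_lie, hD]
  have hfk : f.comp k = LieHom.id := by
    refine SD.hom_ext' ?_ ?_
    · have : f.comp φ = SD.inl D := by
        ext p
        change f (φ _) = _
        rw [φof, hfφ]
      intro a
      change f (k _) = _
      simp only [k, SD.desc_inl]
      exact congrArg (fun k => k a) this
    · change f (k (SD.y D)) = SD.y D
      simp only [k, SD.desc_y, fy]
  have hED : ∀ a, eul d' (D a) = D (eul d' a) + (d y : ℚ) • D a := by
    refine eul_comm d' D _ fun p => ?_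
    rw [hD, eul_of, eul_of, map_smul, hD, ← add_smul]
    congr 1
    simp only [hd']; push_cast; ring
  have hfint : ∀ a, f (eul d a) = SD.eul D (eul d') (d y) (f a) := by
    refine deriv_ext f (f.toLinearMap.comp (eul d)) ((SD.eul D (eul d') (d y)).comp f.toLinearMap)
      ?_ ?_ ?_
    · intro a b
      change f (eul d ⁅a, b⁆) = ⁅f (eul d a), f b⁆ + ⁅f a, f (eul d b)⁆
      rw [eul_lie, map_add, LieHom.map_lie, LieHom.map_lie]
    · intro a b
      change SD.eul D (eul d') (d y) (f ⁅a, b⁆) = ⁅SD.eul D (eul d') (d y) (f a), f b⁆ +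
        ⁅f a, SD.eul D (eul d') (d y) (f b)⁆
      rw [LieHom.map_lie, SD.eul_lie _ _ (eul_lie d') hED]
    · intro x
      change f (eul d (of ℚ x)) = SD.eul D (eul d') (d y) (f (of ℚ x))
      rw [eul_of, map_smul]
      by_cases h : x = y
      · subst h
        rw [fy, SD.eul_y]
      · rw [fx ⟨x, h⟩, SD.eul_inl, eul_of, map_smul]
        simp [hd']
  let e0 : FreeLieAlgebra ℚ X ≃ₗ[ℚ] SD D :=
    { f.toLinearMap with
      invFun := k
      left_inv := fun a => congrArg (fun k => k a) hkf
      right_inv := fun a => congrArg (fun k => k a) hfk }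
  exact ⟨e0.trans (SD.toProd D), fun a => hfint a⟩

end SympPBW

namespace SympPBW
open FreeLieAlgebra

/-- weights after elimination of `y` -/
def elimWt {X : Type} (d : X → ℕ) (y : X) (p : ℕ × {x : X // x ≠ y}) : ℕ := p.1 * d y + d p.2

theorem elimWt_fin {X : Type} (d : X → ℕ) (y : X) (hy : 1 ≤ d y)
    (hfin : ∀ n, {x | d x = n}.Finite) (n : ℕ) : {p | elimWt d y p = n}.Finite := by
  have h1 : {x : X | d x ≤ n}.Finite := by
    have : {x : X | d x ≤ n} = ⋃ i ∈ Set.Iic n, {x | d x = i} := by ext; simp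
    rw [this]
    exact (Set.finite_Iic n).biUnion fun i _ => hfin i
  have h2 : {x : {x : X // x ≠ y} | d x ≤ n}.Finite :=
    h1.preimage (Subtype.val_injective.injOn)
  refine ((Set.finite_Iic n).prod h2).subset ?_
  rintro ⟨k, x⟩ hp
  simp only [elimWt, Set.mem_ofPred_eq] at hp
  refine ⟨?_, ?_⟩
  · simp only [Set.mem_Iic]; nlinarith
  · simp only [Set.mem_ofPred_eq]; omega

theorem count {X : Type} (d : X → ℕ) (y : X) (hy : 1 ≤ d y)
    (hfin : ∀ n, {x | d x = n}.Finite) (n : ℕ) :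
    {x | d x = n}.ncard + {p | elimWt d y p + d y = n}.ncard =
      (if n = d y then 1 else 0) + {p | elimWt d y p = n}.ncard := by
  have h1 : {x | d x = n}.ncard = (if n = d y then 1 else 0) +
      {x : {x : X // x ≠ y} | d x = n}.ncard := by
    have e : (Subtype.val '' {x : {x : X // x ≠ y} | d x = n}) = {x | d x = n} \ {y} := by
      ext x
      simp only [Set.mem_image, Set.mem_ofPred_eq, Subtype.exists, Set.mem_sdiff,
        Set.mem_singleton_iff]
      constructor
      · rintro ⟨x, h, h', rfl⟩; exact ⟨h', h⟩
      · rintro ⟨h, h'⟩; exact ⟨x, h', h, rfl⟩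
    rw [← Set.ncard_image_of_injective _ Subtype.val_injective, e]
    split_ifs with h
    · rw [add_comm, Set.ncard_sdiff_singleton_add_one (by simp [h]) (hfin n)]
    · rw [Set.sdiff_singleton_eq_self (by simpa using Ne.symm h), zero_add]
  have h2 : {p | elimWt d y p = n} = ((fun x => (0, x)) '' {x : {x : X // x ≠ y} | d x = n}) ∪
      ((fun p => (p.1 + 1, p.2)) '' {p | elimWt d y p + d y = n}) := by
    ext ⟨k, x⟩
    simp only [Set.mem_ofPred_eq, Set.mem_union, Set.mem_image, Prod.mk.injEq, Prod.exists]
    constructor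
    · intro h
      cases k with
      | zero => left; exact ⟨x, by simpa [elimWt] using h, rfl, rfl⟩
      | succ k => right; exact ⟨k, x, by rw [← h]; simp only [elimWt]; ring, rfl, rfl⟩
    · rintro (⟨x, h, rfl, rfl⟩ | ⟨k, x, h, rfl, rfl⟩)
      · simpa [elimWt] using h
      · rw [← h]; simp only [elimWt]; ring
  have hf := elimWt_fin d y hy hfin n
  rw [h2] at hf
  rw [h1, h2, Set.ncard_union_eq ?_ (hf.subset Set.subset_union_left)
    (hf.subset Set.subset_union_right), Set.ncard_image_of_injective, Set.ncard_image_of_injective]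
  · ring
  · rintro ⟨a, b⟩ ⟨a', b'⟩ h
    simp only [Prod.mk.injEq, add_left_inj] at h
    simp [h]
  · intro a b h
    simpa using h
  · rw [Set.disjoint_left]
    rintro _ ⟨x, _, rfl⟩ ⟨p, _, h⟩
    simp at h

/-- generating series of the generators -/
noncomputable def cs {X : Type} (d : X → ℕ) : PowerSeries ℚ :=
  PowerSeries.mk fun n => ({x | d x = n}.ncard : ℚ)

theorem cs_elim {X : Type} (d : X → ℕ) (y : X) (hy : 1 ≤ d y)
    (hfin : ∀ n, {x | d x = n}.Finite) :
    1 - cs d = (1 - PowerSeries.X ^ d y) * (1 - cs (elimWt d y)) := by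
  have : cs d + PowerSeries.X ^ d y * cs (elimWt d y) =
      PowerSeries.X ^ d y + cs (elimWt d y) := by
    ext n
    have := count d y hy hfin n
    rw [map_add, map_add, PowerSeries.coeff_X_pow_mul', PowerSeries.coeff_X_pow]
    simp only [cs, PowerSeries.coeff_mk]
    have h2 : (if d y ≤ n then ({p | elimWt d y p = n - d y}.ncard : ℚ) else 0) =
        ({p | elimWt d y p + d y = n}.ncard : ℚ) := by
      split_ifs with h
      · congr 2; ext p; simp only [Set.mem_ofPred_eq]; omega
      · have : {p | elimWt d y p + d y = n} = ∅ := by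
          ext p; simp only [Set.mem_ofPred_eq, Set.mem_empty_iff_false, iff_false]; omega
        rw [this]; simp
    rw [h2]
    exact_mod_cast this
  linear_combination -this

/-- The conclusion for `L` with Euler operator `E` and target series `s`. -/
def Good (R : ℕ) {L : Type} [AddCommGroup L] [Module ℚ L] (E : L →ₗ[ℚ] L) (s : PowerSeries ℚ) :
    Prop :=
  (∀ r, 1 ≤ r → r ≤ R → FiniteDimensional ℚ (Module.End.eigenspace E (r:ℚ))) ∧
    (PowerSeries.X : PowerSeries ℚ) ^ (R + 1) ∣
      ∏ r ∈ Finset.Icc 1 R, (1 - (PowerSeries.X : PowerSeries ℚ) ^ r) ^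
        Module.finrank ℚ (Module.End.eigenspace E (r:ℚ)) - s

theorem Good.step {R : ℕ} {L F : Type} [AddCommGroup L] [Module ℚ L] [AddCommGroup F] [Module ℚ F]
    (e : L ≃ₗ[ℚ] F × ℚ) (EL : L →ₗ[ℚ] L) (EF : F →ₗ[ℚ] F) (d : ℕ) (hd : 1 ≤ d) (hdR : d ≤ R)
    (h : ∀ a, e (EL a) = (EF (e a).1, (d:ℚ) * (e a).2)) (s : PowerSeries ℚ)
    (hF : Good R EF s) : Good R EL ((1 - PowerSeries.X ^ d) * s) := by
  obtain ⟨h1, h2⟩ := hF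
  have key := fun r hr hr' => eig_split e EL EF d h r (h1 r hr hr')
  refine ⟨fun r hr hr' => (key r hr hr').1, ?_⟩
  have : ∏ r ∈ Finset.Icc 1 R, (1 - (PowerSeries.X : PowerSeries ℚ) ^ r) ^
        Module.finrank ℚ (Module.End.eigenspace EL (r:ℚ)) = (1 - PowerSeries.X ^ d) *
      ∏ r ∈ Finset.Icc 1 R, (1 - (PowerSeries.X : PowerSeries ℚ) ^ r) ^
        Module.finrank ℚ (Module.End.eigenspace EF (r:ℚ)) := by
    have h3 : (1 - PowerSeries.X ^ d : PowerSeries ℚ) = ∏ r ∈ Finset.Icc 1 R,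
        (1 - (PowerSeries.X : PowerSeries ℚ) ^ r) ^ (if r = d then 1 else 0) := by
      rw [Finset.prod_eq_single d]
      · simp
      · intro b _ hb; simp [hb]
      · intro hb; exact absurd (Finset.mem_Icc.2 ⟨hd, hdR⟩) hb
    rw [h3, ← Finset.prod_mul_distrib]
    refine Finset.prod_congr rfl fun r hr => ?_
    rw [Finset.mem_Icc] at hr
    rw [(key r hr.1 hr.2).2, pow_add, mul_comm]
  rw [this, ← mul_sub]
  exact Dvd.dvd.mul_left h2 _

theorem free_main_aux (R j : ℕ) : ∀ (N : ℕ), N + j = R + 1 → 1 ≤ N → ∀ (m : ℕ) (X : Type)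
    (d : X → ℕ), (∀ x, N ≤ d x) → (∀ n, {x | d x = n}.Finite) → {x | d x = N}.ncard = m →
    Good R (eul d) (1 - cs d) := by
  induction j with
  | zero =>
    intro N hN hN1 m X d hd hfin hm
    have hlow : ∀ r, r ≤ R → Module.End.eigenspace (eul d) (r : ℚ) = ⊥ :=
      fun r hr => free_low d N hd r (by omega)
    refine ⟨fun r _ hr => ?_, ?_⟩
    · rw [hlow r hr]; infer_instance
    · rw [Finset.prod_eq_one]
      · rw [PowerSeries.X_pow_dvd_iff]
        intro n hn
        have : {x | d x = n} = ∅ := by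
          ext x
          have := hd x
          simp only [Set.mem_ofPred_eq, Set.mem_empty_iff_false, iff_false]; omega
        simp [cs, this]
      · intro r hr
        rw [hlow r (Finset.mem_Icc.1 hr).2]; simp
  | succ j ih =>
    intro N hN hN1 m
    induction m with
    | zero =>
      intro X d hd hfin hm
      refine ih (N + 1) (by omega) (by omega) _ X d (fun x => ?_) hfin rfl
      rw [Set.ncard_eq_zero (hfin N)] at hm
      have h1 : d x ≠ N := fun h => by
        have : x ∈ {x | d x = N} := h
        rw [hm] at this; exact this
      have := hd x
      omega
    | succ m ihm =>
      intro X d hd hfin hm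
      obtain ⟨y, hy⟩ : {x | d x = N}.Nonempty := by
        apply Set.nonempty_of_ncard_ne_zero; omega
      change d y = N at hy
      have hy1 : 1 ≤ d y := by omega
      have hd' : ∀ p, N ≤ elimWt d y p := fun p => by
        have := hd p.2
        simp only [elimWt]; omega
      have hc := count d y hy1 hfin N
      have h0 : {p | elimWt d y p + d y = N} = ∅ := by
        ext p
        have := hd' p
        simp only [Set.mem_ofPred_eq, Set.mem_empty_iff_false, iff_false]; omega
      rw [h0, hm, if_pos hy.symm, Set.ncard_empty] at hc
      have hg := ihm _ (elimWt d y) hd' (elimWt_fin d y hy1 hfin) (by omega)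
      obtain ⟨e, he⟩ := elim d y
      rw [cs_elim d y hy1 hfin]
      exact Good.step e _ _ (d y) hy1 (by omega) he _ hg

theorem free_main (R : ℕ) (X : Type) (d : X → ℕ) (hd : ∀ x, 1 ≤ d x)
    (hfin : ∀ n, {x | d x = n}.Finite) : Good R (eul d) (1 - cs d) :=
  free_main_aux R R 1 (by omega) le_rfl _ X d hd hfin rfl

end SympPBW

namespace SympPBW
open FreeLieAlgebra

section lcs
variable {L : Type} [LieRing L] [LieAlgebra ℚ L] {ι : Type} (gen : ι → L)

/-- Span of left-normed brackets of length `n+1` -/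
def W : ℕ → Submodule ℚ L
  | 0 => Submodule.span ℚ (Set.range gen)
  | n + 1 => Submodule.span ℚ {a | ∃ i, ∃ w ∈ W n, ⁅gen i, w⁆ = a}

theorem W_top (hgen : ∀ S : LieSubalgebra ℚ L, (∀ i, gen i ∈ S) → ∀ a, a ∈ S) :
    ⨆ n, W gen n = ⊤ := by
  have h0 : ∀ i, gen i ∈ ⨆ n, W gen n := fun i =>
    Submodule.mem_iSup_of_mem 0 (Submodule.subset_span ⟨i, rfl⟩)
  have h1 : ∀ i, ∀ s ∈ ⨆ n, W gen n, ⁅gen i, s⁆ ∈ ⨆ n, W gen n := by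
    intro i s hs
    induction hs using Submodule.iSup_induction' with
    | zero => simp
    | add u v _ _ hu hv => rw [lie_add]; exact add_mem hu hv
    | mem n u hu => exact Submodule.mem_iSup_of_mem (n + 1) (Submodule.subset_span ⟨i, u, hu, rfl⟩)
  let T : LieSubalgebra ℚ L :=
    { carrier := {a | ∀ s ∈ ⨆ n, W gen n, ⁅a, s⁆ ∈ ⨆ n, W gen n}
      add_mem' := fun ha hb s hs => by rw [add_lie]; exact add_mem (ha s hs) (hb s hs)
      zero_mem' := fun s hs => by simp
      smul_mem' := fun t a ha s hs => by rw [smul_lie]; exact Submodule.smul_mem _ _ (ha s hs)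
      lie_mem' := fun {a b} ha hb s hs => by
        rw [lie_lie]; exact sub_mem (ha _ (hb _ hs)) (hb _ (ha _ hs)) }
  have hT := hgen T h1
  let S : LieSubalgebra ℚ L :=
    { ⨆ n, W gen n with lie_mem' := fun {a b} _ hb => hT a b hb }
  exact eq_top_iff.2 fun a _ => hgen S h0 a

theorem W_lcs (n : ℕ) : W gen n ≤ (LieModule.lowerCentralSeries ℚ L L n).toSubmodule := by
  induction n with
  | zero => simp
  | succ n ih =>
    refine Submodule.span_le.2 ?_
    rintro _ ⟨i, w, hw, rfl⟩
    rw [LieModule.lowerCentralSeries_succ]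
    exact LieSubmodule.lie_mem_lie (LieSubmodule.mem_top _) (ih hw)

variable (E : L →ₗ[ℚ] L)

theorem W_eig (hE : ∀ a b, E ⁅a, b⁆ = ⁅E a, b⁆ + ⁅a, E b⁆)
    (hEg : ∀ i, E (gen i) = gen i)
    (n : ℕ) : W gen n ≤ Module.End.eigenspace E ((n + 1 : ℕ) : ℚ) := by
  induction n with
  | zero =>
    refine Submodule.span_le.2 ?_
    rintro _ ⟨i, rfl⟩
    simp [hEg]
  | succ n ih =>
    refine Submodule.span_le.2 ?_
    rintro _ ⟨i, w, hw, rfl⟩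
    have h1 : gen i ∈ Module.End.eigenspace E ((1 : ℕ) : ℚ) := by simp [hEg]
    have := eig_lie E hE h1 (ih hw)
    rwa [add_comm 1 (n+1)] at this

theorem eig_W (hE : ∀ a b, E ⁅a, b⁆ = ⁅E a, b⁆ + ⁅a, E b⁆)
    (hEg : ∀ i, E (gen i) = gen i)
    (hgen : ∀ S : LieSubalgebra ℚ L, (∀ i, gen i ∈ S) → ∀ a, a ∈ S)
    (n : ℕ) : Module.End.eigenspace E ((n + 1 : ℕ) : ℚ) ≤ W gen n := by
  intro a ha
  have htop : a ∈ W gen n ⊔ ⨆ (j) (_ : j ≠ n), W gen j := by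
    have : (⊤ : Submodule ℚ L) ≤ W gen n ⊔ ⨆ (j) (_ : j ≠ n), W gen j := by
      rw [← W_top gen hgen]
      refine iSup_le fun j => ?_
      by_cases h : j = n
      · subst h; exact le_sup_left
      · exact (le_iSup₂ (f := fun (j : ℕ) (_ : j ≠ n) => W gen j) j h).trans le_sup_right
    exact this trivial
  obtain ⟨u, hu, v, hv, rfl⟩ := Submodule.mem_sup.1 htop
  have hv1 : v ∈ Module.End.eigenspace E ((n + 1 : ℕ) : ℚ) := by
    have := sub_mem ha (W_eig gen E hE hEg n hu)
    rwa [add_sub_cancel_left] at this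
  have hle : (⨆ (j) (_ : j ≠ n), W gen j) ≤
      ⨆ (j) (_ : j ≠ ((n + 1 : ℕ) : ℚ)), Module.End.eigenspace E j := by
    refine iSup₂_le fun j hj => (W_eig gen E hE hEg j).trans ?_
    refine le_iSup₂ (f := fun (j : ℚ) (_ : j ≠ ((n + 1 : ℕ) : ℚ)) => Module.End.eigenspace E j)
      ((j + 1 : ℕ) : ℚ) ?_
    have : j + 1 ≠ n + 1 := by omega
    exact_mod_cast this
  have := Submodule.disjoint_def.1 (Module.End.eigenspaces_iSupIndep E ((n + 1 : ℕ) : ℚ)) v hv1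
    (hle hv)
  rw [this, add_zero]; exact hu

theorem lcs_eq (hE : ∀ a b, E ⁅a, b⁆ = ⁅E a, b⁆ + ⁅a, E b⁆)
    (hEg : ∀ i, E (gen i) = gen i)
    (hgen : ∀ S : LieSubalgebra ℚ L, (∀ i, gen i ∈ S) → ∀ a, a ∈ S)
    (n : ℕ) :
    (LieModule.lowerCentralSeries ℚ L L n).toSubmodule = tail E (n + 1) := by
  have h1 : ∀ a : L, a ∈ tail E 1 := by
    have : (⊤ : Submodule ℚ L) ≤ tail E 1 := by
      rw [← W_top gen hgen]
      exact iSup_le fun n a ha => mem_tail E (by omega) (W_eig gen E hE hEg n ha)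
    exact fun a => this trivial
  apply le_antisymm
  · induction n with
    | zero => exact fun a _ => h1 a
    | succ n ih =>
      rw [LieModule.lowerCentralSeries_succ, LieSubmodule.lieIdeal_oper_eq_linear_span']
      refine Submodule.span_le.2 ?_
      rintro _ ⟨x, _, m, hm, rfl⟩
      have := tail_lie E hE (h1 x) (ih hm)
      rwa [add_comm 1 (n+1)] at this
  · refine iSup_le fun k => ?_
    obtain ⟨k, hk⟩ := k
    obtain ⟨j, rfl⟩ : ∃ j, k = j + 1 := ⟨k - 1, by omega⟩
    refine (eig_W gen E hE hEg hgen j).trans ((W_lcs gen j).trans ?_)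
    exact LieModule.antitone_lowerCentralSeries ℚ L L (show n ≤ j by omega)

theorem finrank_lcsQuotient (hE : ∀ a b, E ⁅a, b⁆ = ⁅E a, b⁆ + ⁅a, E b⁆)
    (hEg : ∀ i, E (gen i) = gen i)
    (hgen : ∀ S : LieSubalgebra ℚ L, (∀ i, gen i ∈ S) → ∀ a, a ∈ S)
    (r : ℕ) (hr : 1 ≤ r) :
    Module.finrank ℚ (lcsQuotient L r) = Module.finrank ℚ (Module.End.eigenspace E (r : ℚ)) := by
  have hP := lcs_eq gen E hE hEg hgen (r - 1)
  have hQ := lcs_eq gen E hE hEg hgen r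
  rw [Nat.sub_add_cancel hr] at hP
  have hle : Module.End.eigenspace E (r : ℚ) ≤
      (LieModule.lowerCentralSeries ℚ L L (r - 1)).toSubmodule := by
    rw [hP]; exact fun a ha => mem_tail E le_rfl ha
  let f : Module.End.eigenspace E (r : ℚ) →ₗ[ℚ] lcsQuotient L r :=
    (Submodule.mkQ _).comp (Submodule.inclusion hle)
  have hf : Function.Bijective f := by
    constructor
    · rw [← LinearMap.ker_eq_bot, LinearMap.ker_eq_bot']
      rintro ⟨a, ha⟩ h0
      have h0' := (Submodule.Quotient.mk_eq_zero _).1 h0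
      have h2 : a ∈ (LieModule.lowerCentralSeries ℚ L L r).toSubmodule := h0'
      rw [hQ] at h2
      exact Subtype.ext (Submodule.disjoint_def.1 (eig_disj E (Nat.lt_succ_self r)) a ha h2)
    · intro q
      obtain ⟨⟨a, ha⟩, rfl⟩ := Submodule.Quotient.mk_surjective _ q
      have h3 : a ∈ Module.End.eigenspace E (r : ℚ) ⊔ tail E (r + 1) := by
        have : tail E r ≤ Module.End.eigenspace E (r : ℚ) ⊔ tail E (r + 1) := by
          refine iSup_le fun n b hb => ?_
          obtain ⟨n, hn⟩ := n
          by_cases h : n = r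
          · subst h; exact Submodule.mem_sup_left hb
          · exact Submodule.mem_sup_right (mem_tail E (n := n) (by omega) hb)
        rw [hP] at ha
        exact this ha
      obtain ⟨u, hu, v, hv, rfl⟩ := Submodule.mem_sup.1 h3
      refine ⟨⟨u, hu⟩, ?_⟩
      refine (Submodule.Quotient.eq _).2 ?_
      change u - (u + v) ∈ (LieModule.lowerCentralSeries ℚ L L r).toSubmodule
      rw [hQ, sub_add_cancel_left]
      exact neg_mem hv
  exact (LinearEquiv.ofBijective f hf).finrank_eq.symm

end lcs
end SympPBW

namespace SympPBW
open FreeLieAlgebra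

section symp
variable (g : ℕ)

/-- quotient map -/
noncomputable def proj : FreeLieAlgebra ℚ (Fin (2 * g)) →ₗ⁅ℚ⁆ SympLieAlgebra g where
  toFun a := LieSubmodule.Quotient.mk a
  map_add' _ _ := rfl
  map_smul' _ _ := rfl
  map_lie' := LieSubmodule.Quotient.mk_bracket _ _ _

theorem proj_surj : Function.Surjective (proj g) :=
  fun q => Submodule.Quotient.mk_surjective (sympIdeal g).toSubmodule q

theorem proj_rel : proj g (sympRelation g) = 0 :=
  LieSubmodule.Quotient.mk_eq_zero'.2 (LieSubmodule.subset_lieSpan (Set.mem_singleton _))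

theorem exists_descend {L : Type} [LieRing L] [LieAlgebra ℚ L]
    (f : FreeLieAlgebra ℚ (Fin (2 * g)) →ₗ⁅ℚ⁆ L) (hf : f (sympRelation g) = 0) :
    ∃ k : SympLieAlgebra g →ₗ⁅ℚ⁆ L, ∀ a, k (proj g a) = f a := by
  have hle : sympIdeal g ≤ f.ker := by
    refine LieSubmodule.lieSpan_le.2 ?_
    rintro _ rfl
    exact (LieHom.mem_ker (f := f)).2 hf
  let k0 : SympLieAlgebra g →ₗ[ℚ] L := Submodule.liftQ (sympIdeal g).toSubmodule f.toLinearMap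
    (fun a ha => (LieHom.mem_ker (f := f)).1 (hle ha))
  have hk0 : ∀ a, k0 (proj g a) = f a := fun a => rfl
  refine ⟨{ k0 with map_lie' := ?_ }, hk0⟩
  intro a b
  obtain ⟨a, rfl⟩ := proj_surj g a
  obtain ⟨b, rfl⟩ := proj_surj g b
  change k0 ⁅proj g a, proj g b⁆ = ⁅k0 (proj g a), k0 (proj g b)⁆
  rw [← LieHom.map_lie, hk0, hk0, hk0, LieHom.map_lie]

theorem gen_top (S : LieSubalgebra ℚ (SympLieAlgebra g)) (h : ∀ i, proj g (of ℚ i) ∈ S)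
    (a : SympLieAlgebra g) : a ∈ S := by
  obtain ⟨a, rfl⟩ := proj_surj g a
  exact free_sub_top (S.comap (proj g)) h a

/-- the remaining generators -/
abbrev Rest : Type := {i : Fin (2 * g) // i.1 ≠ 0 ∧ i.1 ≠ g}

/-- weights -/
def wt : Option (ℕ × Rest g) → ℕ
  | none => 1
  | some p => p.1 + 1

/-- `t i` -/
noncomputable def term (i : Fin g) : FreeLieAlgebra ℚ (Option (ℕ × Rest g)) :=
  if h : i.1 = 0 then 0 else
    ⁅of ℚ (some (0, (⟨⟨i.1, by have := i.2; omega⟩, h, by have := i.2; simp only; omega⟩ : Rest g))),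
      of ℚ (some (0, (⟨⟨g + i.1, by have := i.2; omega⟩, by simp only; omega,
        by simp only; omega⟩ : Rest g)))⁆

theorem eul_term (i : Fin g) : eul (wt g) (term g i) = (2:ℚ) • term g i := by
  unfold term
  split_ifs with h
  · simp
  · rw [eul_lie, eul_of, eul_of]
    simp only [wt, Nat.cast_add, Nat.cast_zero, Nat.cast_one, zero_add, one_smul]
    rw [two_smul]

theorem main_iso (hg : 1 ≤ g) : ∃ (E : SympLieAlgebra g →ₗ[ℚ] SympLieAlgebra g)
    (e : SympLieAlgebra g ≃ₗ[ℚ] FreeLieAlgebra ℚ (Option (ℕ × Rest g)) × ℚ),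
    (∀ a b, E ⁅a, b⁆ = ⁅E a, b⁆ + ⁅a, E b⁆) ∧ (∀ i, E (proj g (of ℚ i)) = proj g (of ℚ i)) ∧
    ∀ a, e (E a) = (eul (wt g) (e a).1, ((1 : ℕ) : ℚ) * (e a).2) := by
  classical
  let i0 : Fin (2 * g) := ⟨0, by omega⟩
  let ig : Fin (2 * g) := ⟨g, by omega⟩
  obtain ⟨D, hD⟩ := exists_lieDer fun p : Option (ℕ × Rest g) =>
    match p with
    | none => ∑ i, term g i
    | some p => of ℚ (some (p.1 + 1, p.2))
  have hD0 : D (of ℚ none) = ∑ i, term g i := hD none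
  have hD1 : ∀ k x, D (of ℚ (some (k, x))) = of ℚ (some (k + 1, x)) := fun k x => hD (some (k, x))
  let f0 : FreeLieAlgebra ℚ (Fin (2 * g)) →ₗ⁅ℚ⁆ SD D :=
    lift ℚ fun i => if h : i.1 ≠ 0 ∧ i.1 ≠ g then SD.inl D (of ℚ (some (0, ⟨i, h⟩))) else
      if i.1 = 0 then SD.inl D (of ℚ none) else SD.y D
  have f00 : f0 (of ℚ i0) = SD.inl D (of ℚ none) := by simp [f0, i0]
  have f0g : f0 (of ℚ ig) = SD.y D := by
    have : g ≠ 0 := by omega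
    simp [f0, ig, this]
  have f0x : ∀ x : Rest g, f0 (of ℚ x.1) = SD.inl D (of ℚ (some (0, x))) := by
    rintro ⟨x, hx⟩
    simp only [f0, lift_of_apply]
    rw [dif_pos hx]
  have hrel : f0 (sympRelation g) = 0 := by
    have h1 : ∀ i : Fin g, f0 ⁅of ℚ (⟨i.1, by have := i.2; omega⟩ : Fin (2 * g)),
        of ℚ (⟨g + i.1, by have := i.2; omega⟩ : Fin (2 * g))⁆ =
        SD.inl D (term g i) + if i = ⟨0, hg⟩ then - SD.inl D (D (of ℚ none)) else 0 := by
      intro i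
      rw [LieHom.map_lie]
      by_cases h : i = ⟨0, hg⟩
      · subst h
        rw [if_pos rfl]
        change ⁅f0 (of ℚ i0), f0 (of ℚ ig)⁆ = _
        rw [f00, f0g, ← lie_skew, SD.y_lie]
        simp [term]
      · have h' : i.1 ≠ 0 := fun h2 => h (Fin.ext h2)
        rw [if_neg h, term, dif_neg h', LieHom.map_lie, ← f0x, ← f0x, add_zero]
    rw [sympRelation, map_sum, Finset.sum_congr rfl fun i _ => h1 i, Finset.sum_add_distrib,
      Finset.sum_ite_eq' , if_pos (Finset.mem_univ _), hD0, map_sum, add_neg_cancel]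
  obtain ⟨f, hf⟩ := exists_descend g f0 hrel
  let φ : FreeLieAlgebra ℚ (Option (ℕ × Rest g)) →ₗ⁅ℚ⁆ SympLieAlgebra g :=
    lift ℚ fun p => match p with
      | none => proj g (of ℚ i0)
      | some p => (fun u => ⁅proj g (of ℚ ig), u⁆)^[p.1] (proj g (of ℚ p.2.1))
  have φ0 : φ (of ℚ none) = proj g (of ℚ i0) := by simp only [φ, lift_of_apply]
  have φ1 : ∀ k x, φ (of ℚ (some (k, x))) =
      (fun u => ⁅proj g (of ℚ ig), u⁆)^[k] (proj g (of ℚ x.1)) := by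
    intro k x; simp only [φ, lift_of_apply]
  have hφD : ⁅proj g (of ℚ ig), proj g (of ℚ i0)⁆ = φ (∑ i, term g i) := by
    have h1 : ∀ i : Fin g, proj g ⁅of ℚ (⟨i.1, by have := i.2; omega⟩ : Fin (2 * g)),
        of ℚ (⟨g + i.1, by have := i.2; omega⟩ : Fin (2 * g))⁆ =
        φ (term g i) + if i = ⟨0, hg⟩ then - ⁅proj g (of ℚ ig), proj g (of ℚ i0)⁆ else 0 := by
      intro i
      rw [LieHom.map_lie]
      by_cases h : i = ⟨0, hg⟩
      · subst h
        rw [if_pos rfl]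
        change ⁅proj g (of ℚ i0), proj g (of ℚ ig)⁆ = _
        rw [← lie_skew]
        simp [term]
      · have h' : i.1 ≠ 0 := fun h2 => h (Fin.ext h2)
        rw [if_neg h, term, dif_neg h', LieHom.map_lie, φ1, φ1, add_zero]
        rfl
    have h2 := proj_rel g
    rw [sympRelation, map_sum, Finset.sum_congr rfl fun i _ => h1 i, Finset.sum_add_distrib,
      Finset.sum_ite_eq', if_pos (Finset.mem_univ _), ← map_sum] at h2
    exact (add_neg_eq_zero.1 h2).symm
  have hφ : ∀ a, ⁅proj g (of ℚ ig), φ a⁆ = φ (D a) := by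
    refine deriv_ext φ ((LieAlgebra.ad ℚ _ (proj g (of ℚ ig))).comp φ.toLinearMap)
      (φ.toLinearMap.comp (D : _ →ₗ[ℚ] _)) ?_ ?_ ?_
    · intro a b
      change ⁅proj g (of ℚ ig), φ ⁅a, b⁆⁆ = ⁅⁅proj g (of ℚ ig), φ a⁆, φ b⁆ +
        ⁅φ a, ⁅proj g (of ℚ ig), φ b⁆⁆
      rw [LieHom.map_lie, leibniz_lie]
    · intro a b
      change φ (D ⁅a, b⁆) = ⁅φ (D a), φ b⁆ + ⁅φ a, φ (D b)⁆
      rw [SD.der_lie, map_add, LieHom.map_lie, LieHom.map_lie]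
    · intro p
      change ⁅proj g (of ℚ ig), φ (of ℚ p)⁆ = φ (D (of ℚ p))
      rcases p with _ | ⟨n, x⟩
      · rw [hD0, φ0, hφD]
      · rw [hD1, φ1, φ1, Function.iterate_succ_apply']
  let k : SD D →ₗ⁅ℚ⁆ SympLieAlgebra g := SD.desc φ (proj g (of ℚ ig)) hφ
  have cases_i : ∀ i : Fin (2 * g), i = i0 ∨ i = ig ∨ ∃ x : Rest g, i = x.1 := by
    intro i
    by_cases h1 : i.1 = 0
    · left; exact Fin.ext h1
    · by_cases h2 : i.1 = g
      · right; left; exact Fin.ext h2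
      · right; right; exact ⟨⟨i, h1, h2⟩, rfl⟩
  have hkf : ∀ a, k (f a) = a := by
    have : (k.comp f).comp (proj g) = proj g := by
      ext i
      change k (f (proj g (of ℚ i))) = proj g (of ℚ i)
      rw [hf]
      rcases cases_i i with rfl | rfl | ⟨x, rfl⟩
      · rw [f00]; simp only [k, SD.desc_inl, φ0]
      · rw [f0g]; simp only [k, SD.desc_y]
      · rw [f0x]; simp only [k, SD.desc_inl, φ1]; rfl
    intro a
    obtain ⟨a, rfl⟩ := proj_surj g a
    exact congrArg (fun k => k a) this
  have hfφ : ∀ (n : ℕ) (x : Rest g), f ((fun u => ⁅proj g (of ℚ ig), u⁆)^[n] (proj g (of ℚ x.1))) =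
      SD.inl D (of ℚ (some (n, x))) := by
    intro n x
    induction n with
    | zero => rw [Function.iterate_zero, id, hf, f0x]
    | succ n ih => rw [Function.iterate_succ_apply', LieHom.map_lie, ih, hf, f0g, SD.y_lie, hD1]
  have hfk : ∀ a, f (k a) = a := by
    have : f.comp k = LieHom.id := by
      refine SD.hom_ext' ?_ ?_
      · have : f.comp φ = SD.inl D := by
          ext p
          change f (φ (of ℚ p)) = _
          rcases p with _ | ⟨n, x⟩
          · rw [φ0, hf, f00]
          · rw [φ1, hfφ]
        intro a
        change f (k (SD.inl D a)) = SD.inl D a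
        simp only [k, SD.desc_inl]
        exact congrArg (fun k => k a) this
      · change f (k (SD.y D)) = SD.y D
        simp only [k, SD.desc_y, hf, f0g]
    exact fun a => congrArg (fun k => k a) this
  have hED : ∀ a, eul (wt g) (D a) = D (eul (wt g) a) + ((1 : ℕ) : ℚ) • D a := by
    refine eul_comm (wt g) D _ fun p => ?_
    rcases p with _ | ⟨n, x⟩
    · rw [eul_of, map_smul, hD0, map_sum, Finset.sum_congr rfl fun i _ => eul_term g i,
        ← Finset.smul_sum, ← add_smul]
      congr 1
      simp only [wt]; norm_num
    · rw [hD1, eul_of, eul_of, map_smul, hD1, ← add_smul]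
      congr 1
      simp only [wt]; push_cast; ring
  let e0 : SympLieAlgebra g ≃ₗ[ℚ] SD D :=
    { f.toLinearMap with
      invFun := k
      left_inv := hkf
      right_inv := hfk }
  let EM := SD.eul D (eul (wt g)) ((1 : ℕ) : ℚ)
  have hEM := SD.eul_lie (D := D) (eul (wt g)) ((1 : ℕ) : ℚ) (eul_lie (wt g)) hED
  refine ⟨k.toLinearMap.comp (EM.comp f.toLinearMap), e0.trans (SD.toProd D), ?_, ?_, ?_⟩
  · intro a b
    change k (EM (f ⁅a, b⁆)) = ⁅k (EM (f a)), b⁆ + ⁅a, k (EM (f b))⁆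
    rw [LieHom.map_lie, hEM, map_add, LieHom.map_lie, LieHom.map_lie, hkf, hkf]
  · intro i
    change k (EM (f (proj g (of ℚ i)))) = proj g (of ℚ i)
    have : EM (f (proj g (of ℚ i))) = f (proj g (of ℚ i)) := by
      rw [hf]
      rcases cases_i i with rfl | rfl | ⟨x, rfl⟩
      · rw [f00]; simp only [EM, SD.eul_inl, eul_of, wt]; simp
      · rw [f0g]; simp only [EM, SD.eul_y]; simp
      · rw [f0x]; simp only [EM, SD.eul_inl, eul_of, wt]; simp
    rw [this, hkf]
  · intro a
    change f (k (EM (f a))) = EM (f a)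
    rw [hfk]

theorem card_rest (hg : 1 ≤ g) : Nat.card (Rest g) + 2 = 2 * g := by
  classical
  have hne : (⟨0, by omega⟩ : Fin (2 * g)) ≠ ⟨g, by omega⟩ := by
    intro h; have := congrArg Fin.val h; simp only at this; omega
  have h1 : (Finset.univ.filter fun i : Fin (2 * g) => i.1 ≠ 0 ∧ i.1 ≠ g) =
      ({⟨0, by omega⟩, ⟨g, by omega⟩} : Finset (Fin (2 * g)))ᶜ := by
    ext i
    simp [Fin.ext_iff]
  rw [Nat.card_eq_fintype_card, Fintype.card_subtype, h1, Finset.card_compl, Finset.card_pair hne,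
    Fintype.card_fin]
  omega

theorem fib_succ (n : ℕ) : {p | wt g p = n + 1} =
    (fun x => some (n, x)) '' Set.univ ∪ (if n = 0 then {none} else ∅) := by
  ext p
  rcases p with _ | ⟨k, x⟩
  · by_cases h : n = 0 <;> simp [wt, h, eq_comm]
  · by_cases h : n = 0 <;> simp [wt, h, eq_comm]

theorem fib_zero : {p | wt g p = 0} = ∅ := by
  ext p
  rcases p with _ | ⟨k, x⟩ <;> simp [wt]

theorem fib_fin (n : ℕ) : {p | wt g p = n}.Finite := by
  cases n with
  | zero => rw [fib_zero]; exact Set.finite_empty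
  | succ n =>
    rw [fib_succ]
    refine (Set.finite_univ.image _).union ?_
    split_ifs
    · exact Set.finite_singleton _
    · exact Set.finite_empty

theorem fib_card (n : ℕ) : {p | wt g p = n + 1}.ncard =
    Nat.card (Rest g) + if n = 0 then 1 else 0 := by
  rw [fib_succ, Set.ncard_union_eq ?_ (Set.finite_univ.image _)
    (by split_ifs; exacts [Set.finite_singleton _, Set.finite_empty]),
    Set.ncard_image_of_injective, Set.ncard_univ]
  · split_ifs <;> simp
  · intro a b h; simpa using h
  · split_ifs <;> simp

theorem series (hg : 1 ≤ g) : (1 - PowerSeries.X ^ 1) * (1 - cs (wt g)) =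
    (1 - PowerSeries.C (2 * g : ℚ) * PowerSeries.X + PowerSeries.X ^ 2 : PowerSeries ℚ) := by
  have hc : (Nat.card (Rest g) : ℚ) = 2 * g - 2 := by
    have := card_rest g hg
    have h2 : (Nat.card (Rest g) : ℚ) + 2 = 2 * g := by exact_mod_cast this
    linarith
  have hcs : cs (wt g) = PowerSeries.X * (1 + PowerSeries.C (2 * g - 2 : ℚ) *
      PowerSeries.mk fun _ => (1:ℚ)) := by
    ext n
    cases n with
    | zero => simp [cs, fib_zero]
    | succ n =>
      rw [PowerSeries.coeff_succ_X_mul]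
      simp only [cs, PowerSeries.coeff_mk, fib_card, map_add, PowerSeries.coeff_C_mul,
        PowerSeries.coeff_one]
      push_cast
      rw [hc]; ring
  have hgeo : (PowerSeries.mk fun _ => (1:ℚ)) * (1 - PowerSeries.X) = 1 :=
    PowerSeries.mk_one_mul_one_sub_eq_one ℚ
  have hC : (PowerSeries.C (2 * g - 2 : ℚ) : PowerSeries ℚ) = PowerSeries.C (2 * g : ℚ) - 2 := by
    rw [map_sub]; rfl
  rw [hcs, hC]
  linear_combination (-(PowerSeries.X * (PowerSeries.C (2 * g : ℚ) - 2))) * hgeo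

end symp
end SympPBW

/-- **PBW generating-function identity for `L_g`.**  Let `g ≥ 1` and for `r ≥ 1` let
`ε_r = dim_ℚ (γ_r L_g / γ_{r+1} L_g)`.  Then for every `R ≥ 1` and every `1 ≤ m ≤ R`, the
coefficient of `z^m` in `∏_{r=1}^R (1 - z^r)^{ε_r}` equals the coefficient of `z^m` in
`1 - 2g·z + z²`. -/
theorem pbw_generating_function_symp_lie_algebra (g : ℕ) (hg : 1 ≤ g) (R : ℕ) (hR : 1 ≤ R) :
    ∀ m : ℕ, 1 ≤ m → m ≤ R →
      (∏ r ∈ Finset.Icc 1 R,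
          ((1 : Polynomial ℚ) - Polynomial.X ^ r) ^
            Module.finrank ℚ (lcsQuotient (SympLieAlgebra g) r)).coeff m =
      ((1 : Polynomial ℚ) - Polynomial.C (2 * g : ℚ) * Polynomial.X +
          Polynomial.X ^ 2).coeff m := by
  intro m _ hmR
  obtain ⟨E, e, hE, hEg, he⟩ := SympPBW.main_iso g hg
  have hgood := SympPBW.Good.step e E _ 1 le_rfl hR he _
    (SympPBW.free_main R _ (SympPBW.wt g)
      (by rintro (_ | ⟨k, x⟩) <;> simp [SympPBW.wt]) (SympPBW.fib_fin g))
  rw [SympPBW.series g hg] at hgood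
  have h1 := PowerSeries.X_pow_dvd_iff.1 hgood.2 m (by omega)
  rw [map_sub, sub_eq_zero] at h1
  rw [← Polynomial.coeff_coe, ← Polynomial.coeff_coe]
  convert h1 using 2
  · rw [← Polynomial.coeToPowerSeries.ringHom_apply, map_prod]
    refine Finset.prod_congr rfl fun r hr => ?_
    rw [SympPBW.finrank_lcsQuotient (fun i => SympPBW.proj g (FreeLieAlgebra.of ℚ i)) E hE hEg
      (SympPBW.gen_top g) r (Finset.mem_Icc.1 hr).1]
    simp
  · simp only [Polynomial.coe_add, Polynomial.coe_sub, Polynomial.coe_one, Polynomial.coe_mul,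
      Polynomial.coe_C, Polynomial.coe_X, Polynomial.coe_pow]
end

section
/- Let g ≥ 2. Then the center of the Lie algebra L_g is trivial: the only element x ∈ L_g with ⁅y, x⁆ = 0 for all y ∈ L_g is x = 0. -/
namespace SympAux

attribute [local instance] LieRing.ofAssociativeRing

open Finsupp

/-- A Lie subalgebra of the free Lie algebra containing the generators is everything. -/
theorem free_induction {X : Type} (S : LieSubalgebra ℚ (FreeLieAlgebra ℚ X))
    (h : ∀ z, FreeLieAlgebra.of ℚ z ∈ S) (u : FreeLieAlgebra ℚ X) : u ∈ S := by
  let f : FreeLieAlgebra ℚ X →ₗ⁅ℚ⁆ S := FreeLieAlgebra.lift ℚ (fun z => ⟨_, h z⟩)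
  have hf : S.incl.comp f = LieHom.id := by
    apply FreeLieAlgebra.hom_ext
    intro z
    simp [f]
  have := LieHom.congr_fun hf u
  have h2 : ((f u : S) : FreeLieAlgebra ℚ X) = u := by simpa using this
  rw [← h2]
  exact (f u).2

/-- An additive derivation-like induction principle. -/
theorem free_induction' {X : Type} {P : FreeLieAlgebra ℚ X → Prop}
    (hof : ∀ z, P (FreeLieAlgebra.of ℚ z)) (h0 : P 0)
    (hadd : ∀ u v, P u → P v → P (u + v)) (hsmul : ∀ (t : ℚ) u, P u → P (t • u))
    (hlie : ∀ u v, P u → P v → P ⁅u, v⁆) (u : FreeLieAlgebra ℚ X) : P u :=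
  free_induction
    { carrier := {u | P u}
      add_mem' := fun {u v} => hadd u v
      zero_mem' := h0
      smul_mem' := fun t u => hsmul t u
      lie_mem' := fun {u v} => hlie u v } hof u

/-- Words: free module on lists. -/
abbrev W (g : ℕ) : Type := List (Fin (2 * g)) →₀ ℚ

/-- The generators `x_i`. -/
def p {g : ℕ} (i : Fin g) : Fin (2 * g) := ⟨i.1, by have := i.2; omega⟩

/-- The generators `x_{g+i}`. -/
def q {g : ℕ} (i : Fin g) : Fin (2 * g) := ⟨g + i.1, by have := i.2; omega⟩

theorem p_inj {g : ℕ} {i j : Fin g} (h : p i = p j) : i = j := by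
  simp only [p, Fin.mk.injEq] at h
  exact Fin.ext h

theorem q_inj {g : ℕ} {i j : Fin g} (h : q i = q j) : i = j := by
  simp only [q, Fin.mk.injEq] at h
  exact Fin.ext (by omega)

theorem p_ne_q {g : ℕ} {i j : Fin g} : p i ≠ q j := by
  intro h
  simp only [p, q, Fin.mk.injEq] at h
  have := i.2
  omega

section
variable {g : ℕ} (o : Fin g)

/-- Left concatenation. -/
noncomputable def lc (z : Fin (2 * g)) : W g →ₗ[ℚ] W g := lmapDomain ℚ ℚ (List.cons z)

/-- Right concatenation. -/
noncomputable def rc (z : Fin (2 * g)) : W g →ₗ[ℚ] W g := lmapDomain ℚ ℚ (fun w => w ++ [z])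

theorem lc_single (z : Fin (2 * g)) (w : List (Fin (2 * g))) (t : ℚ) :
    lc z (single w t) = single (z :: w) t := by
  simp [lc]

theorem rc_single (z : Fin (2 * g)) (w : List (Fin (2 * g))) (t : ℚ) :
    rc z (single w t) = single (w ++ [z]) t := by
  simp [rc]

/-- The remaining part of the relation, acting by concatenation. -/
noncomputable def om : W g →ₗ[ℚ] W g :=
  ∑ i ∈ Finset.univ.erase o, (lc (p i) ∘ₗ lc (q i) - lc (q i) ∘ₗ lc (p i))

/-- The twisted action of the letter `q o` on words. -/
noncomputable def bw : List (Fin (2 * g)) → W g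
  | [] => single [q o] 1
  | c :: w => if c = p o then lc (p o) (bw w) + om o (single w 1) else single (q o :: c :: w) 1

/-- Action of letters. -/
noncomputable def act (z : Fin (2 * g)) : Module.End ℚ (W g) :=
  if z = q o then linearCombination ℚ (bw o) else lc z

theorem act_p (i : Fin g) : act o (p i) = lc (p i) := by
  simp [act, p_ne_q]

theorem act_q (i : Fin g) (h : i ≠ o) : act o (q i) = lc (q i) := by
  have : q i ≠ q o := fun h' => h (q_inj h')
  simp [act, this]

theorem act_b_single (w : List (Fin (2 * g))) : act o (q o) (single w 1) = bw o w := by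
  simp [act]

/-- Representation. -/
noncomputable def rho : FreeLieAlgebra ℚ (Fin (2 * g)) →ₗ⁅ℚ⁆ Module.End ℚ (W g) :=
  FreeLieAlgebra.lift ℚ (act o)

theorem rho_of (z : Fin (2 * g)) : rho o (FreeLieAlgebra.of ℚ z) = act o z := by
  simp [rho]

theorem rho_relation : rho o (sympRelation g) = 0 := by
  have h : rho o (sympRelation g) = ∑ i : Fin g, ⁅act o (p i), act o (q i)⁆ := by
    simp only [sympRelation, map_sum, LieHom.map_lie, rho_of]
    rfl
  rw [h, ← Finset.add_sum_erase _ _ (Finset.mem_univ o)]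
  have h2 : ∑ i ∈ Finset.univ.erase o, ⁅act o (p i), act o (q i)⁆ = om o := by
    rw [om]
    refine Finset.sum_congr rfl fun i hi => ?_
    rw [act_p, act_q o i (Finset.ne_of_mem_erase hi)]
    rfl
  rw [h2]
  apply Finsupp.lhom_ext'
  intro w
  apply LinearMap.ext_ring
  simp only [LinearMap.comp_apply, lsingle_apply, LinearMap.add_apply, Ring.lie_def,
    LinearMap.sub_apply, Module.End.mul_apply, LinearMap.zero_apply]
  rw [act_p, act_b_single, lc_single, act_b_single]
  simp [bw]

theorem rho_ideal (u : FreeLieAlgebra ℚ (Fin (2 * g))) (hu : u ∈ sympIdeal g) :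
    rho o u = 0 := by
  have h : sympIdeal g ≤ (rho o).ker := by
    rw [sympIdeal, LieSubmodule.lieSpan_le]
    rintro _ rfl
    exact LieHom.mem_ker.2 (rho_relation o)
  exact LieHom.mem_ker.1 (h hu)

theorem eps_act (z : Fin (2 * g)) (n : W g) : act o z n [] = 0 := by
  have hl : ∀ (z : Fin (2 * g)) (n : W g), lc z n [] = 0 := by
    intro z n
    simp only [lc, lmapDomain_apply]
    exact mapDomain_of_notMem_range _ _ (by simp)
  by_cases hz : z = q o
  · subst hz
    have hbw : ∀ w, bw o w [] = 0 := by
      intro w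
      cases w with
      | nil => simp [bw]
      | cons c w =>
        rw [bw]
        split_ifs
        · simp [hl, om]
        · simp
    simp [act, linearCombination_apply, Finsupp.sum, Finsupp.finsetSum_apply, hbw]
  · simp [act, hz, hl]

theorem eps_rho (u : FreeLieAlgebra ℚ (Fin (2 * g))) : ∀ n : W g, rho o u n [] = 0 := by
  refine free_induction' (P := fun u => ∀ n : W g, rho o u n [] = 0) ?_ ?_ ?_ ?_ ?_ u
  · intro z n
    rw [rho_of, eps_act]
  · simp
  · intro u v hu hv n
    simp [hu, hv]
  · intro t u hu n
    simp [hu]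
  · intro u v hu hv n
    simp [Ring.lie_def, hu, hv]

theorem lc_rc (z y : Fin (2 * g)) (n : W g) : lc z (rc y n) = rc y (lc z n) := by
  induction n using Finsupp.induction_linear with
  | zero => simp
  | add a b ha hb => simp [ha, hb]
  | single w t => simp [lc_single, rc_single]

theorem om_rc (y : Fin (2 * g)) (n : W g) : om o (rc y n) = rc y (om o n) := by
  simp [om, lc_rc]

theorem bw_rc (y : Fin (2 * g)) (hy : y ≠ p o) (w : List (Fin (2 * g))) :
    bw o (w ++ [y]) = rc y (bw o w) := by
  induction w with
  | nil => simp [bw, hy, rc_single]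
  | cons c w ih =>
    rw [List.cons_append, bw, bw]
    split_ifs
    · rw [ih, map_add, lc_rc, ← om_rc, rc_single]
    · simp [rc_single]

theorem act_rc (z y : Fin (2 * g)) (hy : y ≠ p o) (n : W g) :
    act o z (rc y n) = rc y (act o z n) := by
  by_cases hz : z = q o
  · subst hz
    induction n using Finsupp.induction_linear with
    | zero => simp
    | add a b ha hb => simp [ha, hb]
    | single w t =>
      have hs : ∀ w : List (Fin (2 * g)), (single w t : W g) = t • single w 1 := by simp
      rw [rc_single, hs, hs w, map_smul, map_smul,
        map_smul, act_b_single, act_b_single, bw_rc o y hy]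
  · simp [act, hz, lc_rc]

theorem rho_rc (y : Fin (2 * g)) (hy : y ≠ p o) (u : FreeLieAlgebra ℚ (Fin (2 * g))) :
    ∀ n : W g, rho o u (rc y n) = rc y (rho o u n) := by
  refine free_induction' (P := fun u => ∀ n : W g, rho o u (rc y n) = rc y (rho o u n))
    ?_ ?_ ?_ ?_ ?_ u
  · intro z n
    rw [rho_of, act_rc o z y hy]
  · simp
  · intro u v hu hv n
    simp [hu, hv]
  · intro t u hu n
    simp [hu]
  · intro u v hu hv n
    simp [Ring.lie_def, hu, hv]

/-- Coefficient comparison. -/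
theorem comm_zero (n : W g) (y z : Fin (2 * g)) (hyz : y ≠ z) (hy : lc y n = rc y n)
    (hz : lc z n = rc z n) (h0 : n [] = 0) : n = 0 := by
  have key : ∀ (y c : Fin (2 * g)) (w : List (Fin (2 * g))), lc y n = rc y n → y ≠ c →
      n (c :: w) = 0 := by
    intro y c w h hc
    have h1 : rc y n ((c :: w) ++ [y]) = n (c :: w) := by
      simp only [rc, lmapDomain_apply]
      exact mapDomain_apply (f := fun w => w ++ [y]) (fun a b h => by simpa using h) n (c :: w)
    have h2 : lc y n ((c :: w) ++ [y]) = 0 := by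
      simp only [lc, lmapDomain_apply]
      refine mapDomain_of_notMem_range _ _ ?_
      simp [hc]
    rw [← h1, ← h, h2]
  ext w
  cases w with
  | nil => simpa using h0
  | cons c w =>
    by_cases hc : y = c
    · exact key z c w hz (by rintro rfl; exact hyz hc)
    · exact key y c w hy hc

/-- The generators in the quotient. -/
noncomputable def gen (z : Fin (2 * g)) : SympLieAlgebra g :=
  LieSubmodule.Quotient.mk (FreeLieAlgebra.of ℚ z)

/-- Right-normed bracketing of a word. -/
noncomputable def bet0 : List (Fin (2 * g)) → SympLieAlgebra g
  | [] => 0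
  | z :: w => ⁅gen z, bet0 w⁆ + if w = [] then gen z else 0

/-- Linear extension. -/
noncomputable def bet : W g →ₗ[ℚ] SympLieAlgebra g := linearCombination ℚ bet0

theorem bet_single (w : List (Fin (2 * g))) : bet (single w 1) = bet0 w := by simp [bet]

theorem bet_lc (z : Fin (2 * g)) (n : W g) :
    bet (lc z n) = ⁅gen z, bet n⁆ + n [] • gen z := by
  induction n using Finsupp.induction_linear with
  | zero => simp
  | add a b ha hb => 
    simp only [map_add, ha, hb, lie_add, Finsupp.add_apply, add_smul]
    abel
  | single w t =>
    rw [lc_single]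
    simp only [bet, linearCombination_single, bet0, smul_add, lie_smul, Finsupp.single_apply]
    split_ifs <;> simp

theorem gen_relation :
    ⁅gen (p o), gen (q o)⁆ + ∑ i ∈ Finset.univ.erase o, ⁅gen (p i), gen (q i)⁆ = 0 := by
  rw [Finset.add_sum_erase _ (fun i => ⁅gen (p i), gen (q i)⁆) (Finset.mem_univ o)]
  have h : sympRelation g ∈ sympIdeal g := LieSubmodule.subset_lieSpan rfl
  have h2 : (LieSubmodule.Quotient.mk' (sympIdeal g)) (sympRelation g) = 0 :=
    (LieSubmodule.Quotient.mk_eq_zero _).2 h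
  rw [← h2, sympRelation, map_sum]
  rfl

theorem lc_nil (z : Fin (2 * g)) (n : W g) : lc z n [] = 0 := by
  simp only [lc, lmapDomain_apply]
  exact mapDomain_of_notMem_range _ _ (by simp)

theorem bet_om (n : W g) :
    bet (om o n) = ⁅∑ i ∈ Finset.univ.erase o, ⁅gen (p i), gen (q i)⁆, bet n⁆ +
      (2 * n []) • ∑ i ∈ Finset.univ.erase o, ⁅gen (p i), gen (q i)⁆ := by
  rw [om, LinearMap.sum_apply, map_sum, sum_lie, Finset.smul_sum,
    ← Finset.sum_add_distrib]
  refine Finset.sum_congr rfl fun i _ => ?_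
  simp only [LinearMap.sub_apply, LinearMap.comp_apply, map_sub, bet_lc, lc_nil, zero_smul,
    add_zero, lie_add, lie_smul]
  rw [← lie_skew (gen (p i)) (gen (q i))]
  simp only [neg_lie, lie_lie]
  module

theorem bet_act (z : Fin (2 * g)) (n : W g) :
    bet (act o z n) = ⁅gen z, bet n⁆ + n [] • gen z := by
  by_cases hz : z = q o
  · subst hz
    induction n using Finsupp.induction_linear with
    | zero => simp
    | add a b ha hb =>
      simp only [map_add, ha, hb, lie_add, Finsupp.add_apply, add_smul]
      abel
    | single w t =>
      have hb : ∀ w, bet (bw o w) = ⁅gen (q o), bet0 w⁆ + if w = [] then gen (q o) else 0 := by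
        intro w
        induction w with
        | nil => simp [bw, bet_single, bet0]
        | cons c w ih =>
          rw [bw]
          split_ifs with hc h1
          · simp at h1
          · subst hc
            have hn : bw o w [] = 0 := by
              rw [← act_b_single, eps_act]
            have hrel : ∑ i ∈ Finset.univ.erase o, ⁅gen (p i), gen (q i)⁆
                = - ⁅gen (p o), gen (q o)⁆ := by
              rw [eq_neg_iff_add_eq_zero, add_comm]
              exact gen_relation o
            rw [map_add, bet_lc, bet_om, ih, hn, hrel, bet_single, bet0]
            by_cases hw : w = []
            · subst hw
              simp only [bet0, if_true, single_eq_same, lie_zero, zero_add, zero_smul, add_zero]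
              rw [← lie_skew (gen (q o)) (gen (p o))]
              module
            · simp only [hw, if_false, add_zero, Finsupp.single_apply, mul_zero, zero_smul,
                neg_lie, lie_lie]
              abel
          · rename_i h2
            exact absurd h2 (by simp)
          · rw [bet_single]
            simp [bet0]
      have hs : (single w t : W g) = t • single w 1 := by simp
      rw [hs, map_smul, map_smul, map_smul,
        act_b_single, hb, bet_single, lie_smul, smul_add, Finsupp.smul_apply, Finsupp.single_apply]
      split_ifs <;> simp
  · simp [act, hz, bet_lc]

/-- The Euler operator, on the free Lie algebra. -/
noncomputable def theta0 : FreeLieAlgebra ℚ (Fin (2 * g)) →ₗ[ℚ] SympLieAlgebra g where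
  toFun u := bet (rho o u (single [] 1))
  map_add' u v := by simp
  map_smul' t u := by simp

theorem bet_rho (u : FreeLieAlgebra ℚ (Fin (2 * g))) : ∀ n : W g,
    bet (rho o u n) = ⁅(LieSubmodule.Quotient.mk u : SympLieAlgebra g), bet n⁆
      + n [] • theta0 o u := by
  have hq : ∀ u v, (LieSubmodule.Quotient.mk ⁅u, v⁆ : SympLieAlgebra g)
    = ⁅(LieSubmodule.Quotient.mk u : SympLieAlgebra g), LieSubmodule.Quotient.mk v⁆ :=
    fun u v => rfl
  have hb0 : bet (single ([] : List (Fin (2 * g))) 1) = 0 := by rw [bet_single]; rfl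
  refine free_induction' (P := fun u => ∀ n : W g,
    bet (rho o u n) = ⁅(LieSubmodule.Quotient.mk u : SympLieAlgebra g), bet n⁆
      + n [] • theta0 o u) ?_ ?_ ?_ ?_ ?_ u
  · intro z n
    have : theta0 o (FreeLieAlgebra.of ℚ z) = gen z := by
      change bet (rho o _ _) = _
      rw [rho_of, bet_act, hb0]
      simp
    rw [rho_of, bet_act, this]
    rfl
  · intro n
    have : (LieSubmodule.Quotient.mk 0 : SympLieAlgebra g) = 0 := rfl
    simp [this]
  · intro u v hu hv n
    have : (LieSubmodule.Quotient.mk (u + v) : SympLieAlgebra g) =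
      LieSubmodule.Quotient.mk u + LieSubmodule.Quotient.mk v := rfl
    rw [this]
    simp only [map_add, LinearMap.add_apply, hu, hv, add_lie, smul_add]
    abel
  · intro t u hu n
    have : (LieSubmodule.Quotient.mk (t • u) : SympLieAlgebra g) =
      t • LieSubmodule.Quotient.mk u := rfl
    rw [this]
    simp only [map_smul, LinearMap.smul_apply, hu, smul_lie, smul_add]
    rw [smul_comm]
  · intro u v hu hv n
    have ht : theta0 o ⁅u, v⁆ = ⁅(LieSubmodule.Quotient.mk u : SympLieAlgebra g), theta0 o v⁆
        - ⁅(LieSubmodule.Quotient.mk v : SympLieAlgebra g), theta0 o u⁆ := by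
      change bet (rho o _ _) = _
      simp only [LieHom.map_lie, Ring.lie_def, LinearMap.sub_apply, Module.End.mul_apply, map_sub,
        hu, hv, eps_rho, hb0]
      simp
    rw [ht, hq]
    simp only [LieHom.map_lie, Ring.lie_def, LinearMap.sub_apply, Module.End.mul_apply, map_sub,
        hu, hv, eps_rho, lie_lie, lie_add, lie_smul, smul_sub, zero_smul]
    abel

/-- The Euler operator on the quotient. -/
noncomputable def theta : Module.End ℚ (SympLieAlgebra g) :=
  Submodule.liftQ (sympIdeal g).toSubmodule (theta0 o) (by
    intro u hu
    have : rho o u = 0 := rho_ideal o u hu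
    change bet (rho o u _) = 0
    simp [this])

theorem theta_mk (u : FreeLieAlgebra ℚ (Fin (2 * g))) :
    theta o (LieSubmodule.Quotient.mk u) = bet (rho o u (single [] 1)) := rfl

theorem theta_gen (z : Fin (2 * g)) : theta o (gen z) = gen z := by
  rw [gen, theta_mk, rho_of, bet_act, bet_single]
  simp [bet0, gen]

theorem theta_lie (x y : SympLieAlgebra g) :
    theta o ⁅x, y⁆ = ⁅x, theta o y⁆ + ⁅theta o x, y⁆ := by
  obtain ⟨u, rfl⟩ := LieSubmodule.Quotient.surjective_mk' _ x
  obtain ⟨v, rfl⟩ := LieSubmodule.Quotient.surjective_mk' _ y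
  change theta o (LieSubmodule.Quotient.mk ⁅u, v⁆) = ⁅(LieSubmodule.Quotient.mk u : SympLieAlgebra g),
    theta o (LieSubmodule.Quotient.mk v)⁆ +
    ⁅theta o (LieSubmodule.Quotient.mk u), (LieSubmodule.Quotient.mk v : SympLieAlgebra g)⁆
  rw [← lie_skew (theta o (LieSubmodule.Quotient.mk u))]
  simp only [theta_mk, LieHom.map_lie, Ring.lie_def, LinearMap.sub_apply, Module.End.mul_apply,
    map_sub]
  rw [bet_rho o u (rho o v _), bet_rho o v (rho o u _), eps_rho, eps_rho]
  simp only [zero_smul, add_zero]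
  abel

/-- Sum of the eigenspaces of positive integers. -/
theorem mem_eigen (u : FreeLieAlgebra ℚ (Fin (2 * g))) :
    (LieSubmodule.Quotient.mk u : SympLieAlgebra g) ∈
      ⨆ n : ℕ, (theta o).eigenspace ((n : ℚ) + 1) := by
  refine free_induction' (P := fun u => (LieSubmodule.Quotient.mk u : SympLieAlgebra g) ∈
      ⨆ n : ℕ, (theta o).eigenspace ((n : ℚ) + 1)) ?_ ?_ ?_ ?_ ?_ u
  · intro z
    refine Submodule.mem_iSup_of_mem 0 ?_
    rw [Module.End.mem_eigenspace_iff]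
    simpa [gen] using theta_gen o z
  · exact Submodule.zero_mem _
  · intro u v hu hv
    exact Submodule.add_mem _ hu hv
  · intro t u hu
    exact Submodule.smul_mem _ t hu
  · intro u v hu hv
    change ⁅(LieSubmodule.Quotient.mk u : SympLieAlgebra g),
      (LieSubmodule.Quotient.mk v : SympLieAlgebra g)⁆ ∈ _
    generalize (LieSubmodule.Quotient.mk u : SympLieAlgebra g) = x at hu
    generalize (LieSubmodule.Quotient.mk v : SympLieAlgebra g) = y at hv
    induction hu using Submodule.iSup_induction' with
    | zero => simp
    | add a b _ _ ha hb => rw [add_lie]; exact Submodule.add_mem _ ha hb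
    | mem i x hx =>
      induction hv using Submodule.iSup_induction' with
      | zero => simp
      | add a b _ _ ha hb => rw [lie_add]; exact Submodule.add_mem _ ha hb
      | mem j y hy =>
        refine Submodule.mem_iSup_of_mem (i + j + 1) ?_
        rw [Module.End.mem_eigenspace_iff] at *
        rw [theta_lie, hx, hy, lie_smul, smul_lie, ← add_smul]
        congr 1
        push_cast
        ring

theorem theta_injective (x : SympLieAlgebra g) (hx : theta o x = 0) : x = 0 := by
  obtain ⟨u, rfl⟩ := LieSubmodule.Quotient.surjective_mk' _ x
  have h1 := mem_eigen o u
  have h2 := (theta o).eigenspaces_iSupIndep (0 : ℚ)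
  refine Submodule.disjoint_def.1 h2 _ ?_ ?_
  · rw [Module.End.mem_eigenspace_iff, zero_smul]
    exact hx
  · refine (iSup_le fun n => ?_ : (⨆ n : ℕ, (theta o).eigenspace ((n : ℚ) + 1)) ≤ _) h1
    exact le_iSup₂_of_le ((n : ℚ) + 1) (by positivity) le_rfl

end

theorem center_core (g : ℕ) (hg : 2 ≤ g) (x : SympLieAlgebra g)
    (hx : ∀ y : SympLieAlgebra g, ⁅y, x⁆ = 0) : x = 0 := by
  obtain ⟨u, rfl⟩ := LieSubmodule.Quotient.surjective_mk' _ x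
  let o : Fin g := ⟨0, by omega⟩
  let e : Fin g := ⟨1, by omega⟩
  have hoe : e ≠ o := by simp [o, e]
  have hcomm : ∀ z, act o z = lc z → z ≠ p o →
      lc z (rho o u (Finsupp.single [] 1)) = rc z (rho o u (Finsupp.single [] 1)) := by
    intro z hz hzp
    have h1 : ⁅FreeLieAlgebra.of ℚ z, u⁆ ∈ sympIdeal g :=
      (LieSubmodule.Quotient.mk_eq_zero _).1 (hx (gen z))
    have h2 := rho_ideal o _ h1
    rw [LieHom.map_lie, rho_of, hz, Ring.lie_def, sub_eq_zero] at h2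
    have h3 := LinearMap.congr_fun h2 (Finsupp.single [] 1)
    rw [Module.End.mul_apply, Module.End.mul_apply] at h3
    rw [h3, ← rho_rc o z hzp, lc_single, rc_single]
    rfl
  have h0 := comm_zero (rho o u (Finsupp.single [] 1)) (p e) (q e) p_ne_q
    (hcomm _ (act_p o e) (fun h => hoe (p_inj h)))
    (hcomm _ (act_q o e hoe) (fun h => p_ne_q h.symm)) (eps_rho o u _)
  apply theta_injective o
  change theta o (LieSubmodule.Quotient.mk u) = 0
  rw [theta_mk, h0, map_zero]

end SympAux

/-- For `g ≥ 2`, the center of `L_g` is trivial: the only `x ∈ L_g` with `⁅y, x⁆ = 0` for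
all `y ∈ L_g` is `x = 0`. -/
theorem center_symp_lie_algebra_trivial (g : ℕ) (hg : 2 ≤ g) (x : SympLieAlgebra g)
    (hx : ∀ y : SympLieAlgebra g, ⁅y, x⁆ = 0) : x = 0 := by
  exact SympAux.center_core g hg x hx
end
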